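/- arXiv:math/0502046 — 6 statements merged into one kernel-verified Lean document; each statement's English description precedes it below -/
import Mathlib

section
/- Let A be a nontrivial commutative ring and n ≥ 1. The elementary homogeneous symmetric polynomials p_0(x), p_1(x), …, p_n(x) in the 2n variables x_{01}, x_{11}, …, x_{0n}, x_{1n} are algebraically independent over A. -/
open MvPolynomial

/-- The elementary homogeneous symmetric polynomial `p_k` in the `2n` variables
`x_{01}, x_{11}, …, x_{0n}, x_{1n}` (variable `(i, 0)` is `x_{0i}` and `(i, 1)` is `x_{1i}`),
defined by `p_k = Σ_{S ⊆ {1,…,n}, |S| = k} (∏_{i ∉ S} x_{0i}) (∏_{i ∈ S} x_{1i})`. -/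
noncomputable def ehsp (A : Type*) [CommRing A] (n : ℕ) (k : ℕ) :
    MvPolynomial (Fin n × Fin 2) A :=
  ∑ S ∈ Finset.powersetCard k (Finset.univ : Finset (Fin n)),
    (∏ i ∈ Sᶜ, X (i, (0 : Fin 2))) * ∏ i ∈ S, X (i, (1 : Fin 2))

noncomputable def ehspF (A : Type*) [CommRing A] (n : ℕ) :
    Fin (n + 1) → MvPolynomial (Fin (n + 1)) A :=
  Fin.cases (X 0) (fun k => X 0 * X k.succ)

noncomputable def ehspPhi (n : ℕ) (s : Fin (n + 1) →₀ ℕ) : Fin (n + 1) →₀ ℕ :=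
  s + Finsupp.single 0 (∑ k : Fin n, s k.succ)

lemma ehspPhi_inj (n : ℕ) : Function.Injective (ehspPhi n) := by
  intro s t h
  have h1 : ∀ k : Fin n, s k.succ = t k.succ := by
    intro k
    have := DFunLike.congr_fun h k.succ
    simpa [ehspPhi, Finsupp.single_apply, (Fin.succ_ne_zero k).symm] using this
  have h0 := DFunLike.congr_fun h 0
  simp only [ehspPhi, Finsupp.add_apply, Finsupp.single_eq_same, h1] at h0
  ext i
  refine Fin.cases ?_ h1 i
  omega

lemma ehspF_monomial (A : Type*) [CommRing A] (n : ℕ) (s : Fin (n + 1) →₀ ℕ) (a : A) :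
    aeval (ehspF A n) (monomial s a) = monomial (ehspPhi n s) a := by
  rw [aeval_monomial, monomial_eq (s := ehspPhi n s), Finsupp.prod_fintype _ _ (by simp),
    Finsupp.prod_fintype _ _ (by simp), Fin.prod_univ_succ, Fin.prod_univ_succ]
  simp only [ehspF, ehspPhi, Fin.cases_zero, Fin.cases_succ, mul_pow, Finset.prod_mul_distrib,
    Finset.prod_pow_eq_pow_sum, Finsupp.add_apply, Finsupp.single_eq_same, pow_add,
    algebraMap_eq]
  simp [mul_assoc]

lemma ehspF_inj (A : Type*) [CommRing A] (n : ℕ) :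
    Function.Injective (aeval (R := A) (ehspF A n)) := by
  have key : ∀ (p : MvPolynomial (Fin (n + 1)) A) s,
      coeff (ehspPhi n s) (aeval (ehspF A n) p) = coeff s p := by
    intro p s
    induction p using MvPolynomial.induction_on' with
    | monomial u a =>
      classical
      rw [ehspF_monomial, coeff_monomial, coeff_monomial]
      simp only [(ehspPhi_inj n).eq_iff]
    | add p q hp hq => rw [map_add, coeff_add, coeff_add, hp, hq]
  intro p q h
  ext s
  rw [← key, ← key q, h]

noncomputable def ehspPsi (A : Type*) [CommRing A] (n : ℕ) :
    MvPolynomial (Fin n × Fin 2) A →ₐ[A] Polynomial (MvPolynomial (Fin n) A) :=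
  aeval (fun i => if i.2 = 0 then Polynomial.X else Polynomial.X * Polynomial.C (X i.1))

lemma ehspPsi_ehsp (A : Type*) [CommRing A] (n k : ℕ) :
    ehspPsi A n (ehsp A n k) = Polynomial.X ^ n * Polynomial.C (esymm (Fin n) A k) := by
  simp only [ehsp, esymm, map_sum, map_mul, map_prod, Finset.mul_sum]
  refine Finset.sum_congr rfl fun S _ => ?_
  simp only [ehspPsi, aeval_X]
  simp only [if_true, one_ne_zero, if_false, Finset.prod_mul_distrib, Finset.prod_const]
  rw [← mul_assoc, ← pow_add, Finset.card_compl_add_card, Fintype.card_fin]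

lemma esymm_aeval_inj (A : Type*) [CommRing A] (n : ℕ) :
    Function.Injective (aeval (R := A) (fun i : Fin n => esymm (Fin n) A (i + 1))) := by
  intro p q h
  apply esymmAlgHom_injective (σ := Fin n) A (n := n) (by simp)
  apply Subtype.ext
  rw [esymmAlgHom_apply, esymmAlgHom_apply]
  exact h

theorem ehsp_algebraicIndependent (A : Type*) [CommRing A] [Nontrivial A] (n : ℕ) (hn : 1 ≤ n) :
    AlgebraicIndependent A (fun k : Fin (n + 1) => ehsp A n (k : ℕ)) := by
  have H : (ehspPsi A n).comp (aeval (fun k : Fin (n + 1) => ehsp A n (k : ℕ))) =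
      (((Polynomial.mapAlgHom (aeval (R := A) (fun i : Fin n => esymm (Fin n) A (i + 1)))).comp
        ((Polynomial.expand (MvPolynomial (Fin n) A) n).restrictScalars A)).comp
        (finSuccEquiv A n).toAlgHom).comp (aeval (ehspF A n)) := by
    apply MvPolynomial.algHom_ext
    intro i
    simp only [AlgHom.comp_apply, aeval_X, ehspPsi_ehsp]
    refine Fin.cases ?_ (fun k => ?_) i
    · simp [ehspF, finSuccEquiv_X_zero]
    · simp [ehspF, finSuccEquiv_X_zero, finSuccEquiv_X_succ]
  have hi : Function.Injective ((ehspPsi A n).comp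
      (aeval (fun k : Fin (n + 1) => ehsp A n (k : ℕ)))) := by
    rw [H]
    simp only [AlgHom.coe_comp]
    refine (((?_ : Function.Injective _).comp ?_).comp ?_).comp (ehspF_inj A n)
    · exact Polynomial.map_injective _ (esymm_aeval_inj A n)
    · exact Polynomial.expand_injective hn
    · exact (finSuccEquiv A n).injective
  rw [AlgHom.coe_comp] at hi
  exact hi.of_comp
end

section
/- Let A be a commutative ring, n, m ≥ 1, and work in the polynomial ring B = A[x_{01},x_{11},…,x_{0n},x_{1n}, y_{01},y_{11},…,y_{0m},y_{1m}]. Let f(Z) = Σ_{k=0}^n (−1)^k p_k(x) Z^{n−k} and g(Z) = Σ_{l=0}^m (−1)^l p_l(y) Z^{m−l} be the polynomials over B whose coefficients are (up to sign) the elementary homogeneous symmetric polynomials in the x-variables and y-variables respectively. Then Res_{n,m}(f, g) = ∏_{i=1}^n ∏_{j=1}^m (x_{1i} y_{0j} − x_{0i} y_{1j}). -/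
open MvPolynomial Polynomial

/-- The Sylvester matrix of `f` and `g`, viewed with formal degrees `n` and `m`:
an `(m + n) × (m + n)` matrix whose first `m` rows hold shifted coefficients of `f`
(from the coefficient of `Z^n` down to the constant term) and whose last `n` rows
hold shifted coefficients of `g`. -/
noncomputable def sylvester {R : Type*} [CommRing R] (n m : ℕ) (f g : R[X]) :
    Matrix (Fin (m + n)) (Fin (m + n)) R :=
  Matrix.of fun i j =>
    Fin.addCases
      (fun i₀ : Fin m =>
        if (i₀ : ℕ) ≤ (j : ℕ) ∧ (j : ℕ) ≤ (i₀ : ℕ) + n then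
          f.coeff (n - ((j : ℕ) - (i₀ : ℕ))) else 0)
      (fun i₁ : Fin n =>
        if (i₁ : ℕ) ≤ (j : ℕ) ∧ (j : ℕ) ≤ (i₁ : ℕ) + m then
          g.coeff (m - ((j : ℕ) - (i₁ : ℕ))) else 0)
      i

/-- The resultant `Res_{n,m}(f, g)`: the determinant of the Sylvester matrix of `f` and `g`
viewed with formal degrees `n` and `m`. -/
noncomputable def res {R : Type*} [CommRing R] (n m : ℕ) (f g : R[X]) : R :=
  (sylvester n m f g).det

variable (A : Type*) [CommRing A] (n m : ℕ)

/-- The elementary homogeneous symmetric polynomial `p_k(x)` in the `x`-variables, inside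
the big polynomial ring `B = A[x_{01},…,x_{1n}, y_{01},…,y_{1m}]`. -/
noncomputable def pX (k : ℕ) : MvPolynomial ((Fin n × Fin 2) ⊕ (Fin m × Fin 2)) A :=
  ∑ S ∈ Finset.powersetCard k (Finset.univ : Finset (Fin n)),
    (∏ i ∈ Sᶜ, X (Sum.inl (i, (0 : Fin 2)))) * ∏ i ∈ S, X (Sum.inl (i, (1 : Fin 2)))

/-- The elementary homogeneous symmetric polynomial `p_l(y)` in the `y`-variables, inside
the big polynomial ring `B = A[x_{01},…,x_{1n}, y_{01},…,y_{1m}]`. -/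
noncomputable def pY (l : ℕ) : MvPolynomial ((Fin n × Fin 2) ⊕ (Fin m × Fin 2)) A :=
  ∑ S ∈ Finset.powersetCard l (Finset.univ : Finset (Fin m)),
    (∏ j ∈ Sᶜ, X (Sum.inr (j, (0 : Fin 2)))) * ∏ j ∈ S, X (Sum.inr (j, (1 : Fin 2)))

theorem res_eq_resultant {R : Type*} [CommRing R] (n m : ℕ) (f g : R[X]) :
    res n m f g = Polynomial.resultant f g n m := by
  let e : Fin (m + n) ≃ Fin (n + m) := Fin.revPerm.trans (finCongr (add_comm m n))
  rw [res, Polynomial.resultant, ← Matrix.det_transpose (Polynomial.sylvester f g n m),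
    ← Matrix.det_submatrix_equiv_self e]
  congr 1
  ext i j
  rw [Matrix.submatrix_apply, Matrix.transpose_apply]
  have hj : ((e j : Fin (n + m)) : ℕ) = m + n - (j + 1) := by simp [e, Fin.val_rev]
  have hjl := j.2
  induction i using Fin.addCases with
  | left i =>
    have hi : e (Fin.castAdd n i) = Fin.natAdd n (Fin.rev i) := by
      ext; simp [e, Fin.val_rev]; omega
    have hil := i.2
    rw [hi]
    simp only [_root_.sylvester, Polynomial.sylvester, Matrix.of_apply, Fin.addCases_left,
      Fin.addCases_right, Set.mem_Icc, hj, Fin.val_rev]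
    by_cases h : (i : ℕ) ≤ j ∧ (j : ℕ) ≤ i + n
    · rw [if_pos h, if_pos (by omega)]; congr 1; omega
    · rw [if_neg h, if_neg (by omega)]
  | right i =>
    have hi : e (Fin.natAdd m i) = Fin.castAdd m (Fin.rev i) := by
      ext; simp [e, Fin.val_rev]; omega
    have hil := i.2
    rw [hi]
    simp only [_root_.sylvester, Polynomial.sylvester, Matrix.of_apply, Fin.addCases_left,
      Fin.addCases_right, Set.mem_Icc, hj, Fin.val_rev]
    by_cases h : (i : ℕ) ≤ j ∧ (j : ℕ) ≤ i + m
    · rw [if_pos h, if_pos (by omega)]; congr 1; omega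
    · rw [if_neg h, if_neg (by omega)]

theorem sum_eq_prod_linear {R : Type*} [CommRing R] (n : ℕ) (a b : Fin n → R) :
    (∑ k : Fin (n + 1), Polynomial.C ((-1 : R) ^ (k : ℕ) *
      ∑ S ∈ Finset.powersetCard (k : ℕ) (Finset.univ : Finset (Fin n)),
        (∏ i ∈ Sᶜ, a i) * ∏ i ∈ S, b i) * Polynomial.X ^ (n - (k : ℕ))) =
    ∏ i, (Polynomial.C (a i) * Polynomial.X - Polynomial.C (b i)) := by
  rw [Finset.prod_sub, Finset.sum_powerset, Finset.card_univ, Fintype.card_fin,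
    Finset.sum_range]
  refine Finset.sum_congr rfl fun k _ => ?_
  rw [Finset.mul_sum, map_sum, Finset.sum_mul]
  refine Finset.sum_congr rfl fun S hS => ?_
  rw [Finset.mem_powersetCard] at hS
  have hc : (Sᶜ).card = n - k := by rw [Finset.card_compl, hS.2, Fintype.card_fin]
  rw [← Finset.compl_eq_univ_sdiff, Finset.prod_mul_distrib, Finset.prod_const, hc, hS.2]
  simp only [map_mul, map_pow, map_neg, map_one, map_prod]
  ring

theorem resultant_linear {R : Type*} [CommRing R] (a b c d : R) :
    Polynomial.resultant (Polynomial.C a * Polynomial.X - Polynomial.C b)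
      (Polynomial.C c * Polynomial.X - Polynomial.C d) 1 1 = b * c - a * d := by
  rw [Polynomial.resultant]
  have : Polynomial.sylvester (Polynomial.C a * Polynomial.X - Polynomial.C b)
      (Polynomial.C c * Polynomial.X - Polynomial.C d) 1 1 = !![-d, -b; c, a] := by
    ext i j
    induction j using Fin.addCases <;> fin_cases i <;> rename_i j <;> fin_cases j <;>
      simp [Polynomial.sylvester, Fin.addCases, Polynomial.coeff_X, Polynomial.coeff_C]
  rw [this]
  erw [Matrix.det_fin_two_of]
  ring

theorem lin_natDegree {R : Type*} [CommRing R] {a : R} (b : R) (ha : a ≠ 0) :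
    (Polynomial.C a * Polynomial.X - Polynomial.C b).natDegree = 1 := by
  rw [sub_eq_add_neg, ← Polynomial.C_neg]; exact Polynomial.natDegree_linear ha

theorem lin_leadingCoeff {R : Type*} [CommRing R] {a : R} (b : R) (ha : a ≠ 0) :
    (Polynomial.C a * Polynomial.X - Polynomial.C b).leadingCoeff = a := by
  rw [sub_eq_add_neg, ← Polynomial.C_neg]; exact Polynomial.leadingCoeff_linear ha

theorem resultant_prods {R : Type*} [CommRing R] (n m : ℕ) (a b : Fin n → R) (c d : Fin m → R)
    (ha : ∏ i, a i ≠ 0) (hc : ∏ i, c i ≠ 0) :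
    Polynomial.resultant (∏ i, (Polynomial.C (a i) * Polynomial.X - Polynomial.C (b i)))
      (∏ j, (Polynomial.C (c j) * Polynomial.X - Polynomial.C (d j))) n m =
    ∏ i, ∏ j, (b i * c j - a i * d j) := by
  have ha' : ∀ i, a i ≠ 0 := fun i h => ha (Finset.prod_eq_zero (Finset.mem_univ i) h)
  have hc' : ∀ i, c i ≠ 0 := fun i h => hc (Finset.prod_eq_zero (Finset.mem_univ i) h)
  have hla : ∏ i, (Polynomial.C (a i) * Polynomial.X - Polynomial.C (b i)).leadingCoeff ≠ 0 := by
    simpa only [lin_leadingCoeff _ (ha' _)] using ha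
  have hlc : ∏ i, (Polynomial.C (c i) * Polynomial.X - Polynomial.C (d i)).leadingCoeff ≠ 0 := by
    simpa only [lin_leadingCoeff _ (hc' _)] using hc
  have hda : (∏ i, (Polynomial.C (a i) * Polynomial.X - Polynomial.C (b i))).natDegree = n := by
    rw [Polynomial.natDegree_prod' _ _ hla]; simp [lin_natDegree _ (ha' _)]
  have hdc : (∏ i, (Polynomial.C (c i) * Polynomial.X - Polynomial.C (d i))).natDegree = m := by
    rw [Polynomial.natDegree_prod' _ _ hlc]; simp [lin_natDegree _ (hc' _)]
  have h1 := Polynomial.resultant_prod_left Finset.univ _ _ m hla hdc.le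
  rw [hda] at h1
  rw [h1]
  refine Finset.prod_congr rfl fun i _ => ?_
  rw [lin_natDegree _ (ha' i)]
  have h2 := Polynomial.resultant_prod_right Finset.univ _ _ 1 (lin_natDegree (b i) (ha' i)).le hlc
  rw [hdc] at h2
  rw [h2]
  refine Finset.prod_congr rfl fun j _ => ?_
  rw [lin_natDegree _ (hc' j), resultant_linear]

theorem prod_X_ne_zero {A σ ι : Type*} [CommRing A] [Nontrivial A] [Fintype ι] (v : ι → σ) :
    ∏ i, (MvPolynomial.X (v i) : MvPolynomial σ A) ≠ 0 := by
  have : ∏ i, (MvPolynomial.X (v i) : MvPolynomial σ A) =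
      MvPolynomial.monomial (∑ i, Finsupp.single (v i) 1) 1 := by
    rw [MvPolynomial.monomial_sum_one]; rfl
  rw [this]
  simp

/-- For `f(Z) = Σ_{k=0}^n (−1)^k p_k(x) Z^{n−k}` and
`g(Z) = Σ_{l=0}^m (−1)^l p_l(y) Z^{m−l}` over `B = A[x, y]`, the resultant satisfies
`Res_{n,m}(f, g) = ∏_{i=1}^n ∏_{j=1}^m (x_{1i} y_{0j} − x_{0i} y_{1j})`. -/
theorem res_ehsp (hn : 1 ≤ n) (hm : 1 ≤ m) :
    res n m
      (∑ k : Fin (n + 1),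
        Polynomial.C ((-1 : MvPolynomial ((Fin n × Fin 2) ⊕ (Fin m × Fin 2)) A) ^ (k : ℕ) *
          pX A n m (k : ℕ)) * Polynomial.X ^ (n - (k : ℕ)))
      (∑ l : Fin (m + 1),
        Polynomial.C ((-1 : MvPolynomial ((Fin n × Fin 2) ⊕ (Fin m × Fin 2)) A) ^ (l : ℕ) *
          pY A n m (l : ℕ)) * Polynomial.X ^ (m - (l : ℕ))) =
    ∏ i : Fin n, ∏ j : Fin m,
      (X (Sum.inl (i, (1 : Fin 2))) * X (Sum.inr (j, (0 : Fin 2))) -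
        X (Sum.inl (i, (0 : Fin 2))) * X (Sum.inr (j, (1 : Fin 2)))) := by
  cases subsingleton_or_nontrivial A
  · exact Subsingleton.elim _ _
  · rw [res_eq_resultant]
    simp only [pX, pY]
    rw [sum_eq_prod_linear, sum_eq_prod_linear]
    exact resultant_prods n m _ _ _ _ (prod_X_ne_zero _) (prod_X_ne_zero _)
end

section
/- Let A be a commutative ring and n ≥ 1. Let the symmetric group S_n act on the polynomial ring A[x_{01},x_{11},…,x_{0n},x_{1n}] by permuting the index i of the pairs of variables (x_{0i}, x_{1i}). Suppose f is S_n-invariant and there is a d ≥ 0 such that f is homogeneous of degree d in the pair of variables (x_{0i}, x_{1i}) for every i = 1, …, n (i.e., every monomial of f has total degree d in x_{0i} and x_{1i}, for each i). Then f lies in the A-subalgebra generated by the elementary homogeneous symmetric polynomials p_0(x), …, p_n(x). -/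
open MvPolynomial

namespace EhspAux

variable {A : Type*} [CommRing A] {n : ℕ}

/-- multi-weights -/
def wt (n : ℕ) : Fin n × Fin 2 → (Fin n → ℕ) := fun q => Pi.single q.1 1

lemma weight_wt (m : Fin n × Fin 2 →₀ ℕ) (i : Fin n) :
    Finsupp.weight (wt n) m i = m (i, 0) + m (i, 1) := by
  rw [Finsupp.weight_apply, Finsupp.sum_fintype _ _ (by simp)]
  simp [wt, Fintype.sum_prod_type, Finset.sum_apply, Pi.single_apply, Finset.sum_add_distrib]

/-- dehomogenization -/
noncomputable def deh (A : Type*) [CommRing A] (n : ℕ) :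
    MvPolynomial (Fin n × Fin 2) A →ₐ[A] MvPolynomial (Fin n) A :=
  aeval fun q => if q.2 = 0 then 1 else X q.1

/-- exponent projection -/
noncomputable def pr (m : Fin n × Fin 2 →₀ ℕ) : Fin n →₀ ℕ :=
  Finsupp.equivFunOnFinite.symm fun i => m (i, 1)

lemma deh_monomial (m : Fin n × Fin 2 →₀ ℕ) (c : A) :
    deh A n (monomial m c) = monomial (pr m) c := by
  rw [deh, aeval_monomial, Finsupp.prod_fintype _ _ (by simp), monomial_eq,
    Finsupp.prod_fintype _ _ (by simp)]
  simp [Fintype.prod_prod_type, pr, algebraMap_eq]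

lemma deh_eq (f : MvPolynomial (Fin n × Fin 2) A) :
    deh A n f = ∑ m ∈ f.support, monomial (pr m) (coeff m f) := by
  conv_lhs => rw [f.as_sum, map_sum]
  simp only [deh_monomial]

lemma coeff_deh {d : ℕ} {f : MvPolynomial (Fin n × Fin 2) A}
    (hf : IsWeightedHomogeneous (wt n) f (fun _ => d)) {m : Fin n × Fin 2 →₀ ℕ}
    (hm : m ∈ f.support) : coeff (pr m) (deh A n f) = coeff m f := by
  classical
  rw [deh_eq, coeff_sum, Finset.sum_eq_single_of_mem m hm]
  · simp
  · intro b hb hne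
    rw [coeff_monomial, if_neg]
    intro h
    apply hne
    have h1 : ∀ i, b (i, 1) = m (i, 1) := fun i => by
      simpa [pr] using DFunLike.congr_fun h i
    have hb' := hf (mem_support_iff.1 hb)
    have hm' := hf (mem_support_iff.1 hm)
    have h0 : ∀ i, b (i, 0) = m (i, 0) := fun i => by
      have e1 := congrFun hb' i
      have e2 := congrFun hm' i
      rw [weight_wt] at e1 e2
      have := h1 i
      omega
    ext ⟨i, j⟩
    fin_cases j
    · exact h0 i
    · exact h1 i

lemma deh_ne_zero {d : ℕ} {f : MvPolynomial (Fin n × Fin 2) A}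
    (hf : IsWeightedHomogeneous (wt n) f (fun _ => d)) (h0 : f ≠ 0) : deh A n f ≠ 0 := by
  obtain ⟨m, hm⟩ := support_nonempty.2 h0
  intro h
  have := coeff_deh hf hm
  rw [h, coeff_zero] at this
  exact mem_support_iff.1 hm this.symm

lemma le_of_mem_support_deh {d : ℕ} {f : MvPolynomial (Fin n × Fin 2) A}
    (hf : IsWeightedHomogeneous (wt n) f (fun _ => d)) {s : Fin n →₀ ℕ}
    (hs : s ∈ (deh A n f).support) (i : Fin n) : s i ≤ d := by
  classical
  rw [deh_eq, mem_support_iff, coeff_sum] at hs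
  obtain ⟨m, hm, h⟩ := Finset.exists_ne_zero_of_sum_ne_zero hs
  rw [coeff_monomial] at h
  have h' : pr m = s := by
    by_contra hh
    simp [hh] at h
  have := congrFun (hf (mem_support_iff.1 hm)) i
  rw [weight_wt] at this
  rw [← h']
  simp only [pr, Finsupp.equivFunOnFinite_symm_apply_apply]
  omega

lemma deh_ehsp (k : ℕ) : deh A n (ehsp A n k) = esymm (Fin n) A k := by
  simp [ehsp, deh, esymm, map_sum, map_prod]

lemma ehsp_hom (k : ℕ) : IsWeightedHomogeneous (wt n) (ehsp A n k) (fun _ => 1) := by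
  classical
  refine IsWeightedHomogeneous.sum _ _ _ fun S _ => ?_
  have h1 := IsWeightedHomogeneous.prod (w := wt n) Sᶜ
    (fun i => (X (i, (0 : Fin 2)) : MvPolynomial (Fin n × Fin 2) A)) (fun i => wt n (i, 0))
    (fun i _ => isWeightedHomogeneous_X _ _ _)
  have h2 := IsWeightedHomogeneous.prod (w := wt n) S
    (fun i => (X (i, (1 : Fin 2)) : MvPolynomial (Fin n × Fin 2) A)) (fun i => wt n (i, 1))
    (fun i _ => isWeightedHomogeneous_X _ _ _)
  convert h1.mul h2 using 1
  ext j
  simp only [wt, Pi.add_apply, Finset.sum_apply]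
  rw [Finset.sum_compl_add_sum]
  simp [Pi.single_apply]

lemma deh_symm {f : MvPolynomial (Fin n × Fin 2) A}
    (hinv : ∀ σ : Equiv.Perm (Fin n),
      rename (fun q : Fin n × Fin 2 => (σ q.1, q.2)) f = f) : (deh A n f).IsSymmetric := by
  intro σ
  conv_rhs => rw [← hinv σ]
  rw [deh, aeval_rename, ← AlgHom.comp_apply]
  congr 1
  ext q : 1
  simp only [AlgHom.comp_apply, aeval_X, Function.comp]
  split_ifs <;> simp

/-- homogenized monomial -/
noncomputable def hm (d : ℕ) (t : Fin n →₀ ℕ) (c : A) : MvPolynomial (Fin n × Fin 2) A :=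
  C c * (ehsp A n 0 ^ (d - ∑ i, t i) * ∏ i : Fin n, ehsp A n (i + 1) ^ t i)

lemma hm_hom {d : ℕ} {t : Fin n →₀ ℕ} (ht : ∑ i, t i ≤ d) (c : A) :
    IsWeightedHomogeneous (wt n) (hm d t c) (fun _ => d) := by
  refine IsWeightedHomogeneous.C_mul ?_ c
  have h1 := (ehsp_hom (A := A) (n := n) 0).pow (d - ∑ i, t i)
  have h2 := IsWeightedHomogeneous.prod (w := wt n) Finset.univ
    (fun i : Fin n => ehsp A n (i + 1) ^ t i) _ (fun i _ => (ehsp_hom _).pow (t i))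
  convert h1.mul h2 using 1
  ext j
  simp [Finset.sum_apply]
  omega

lemma hm_deh (d : ℕ) (t : Fin n →₀ ℕ) (c : A) :
    deh A n (hm d t c) = esymmAlgHomMonomial (Fin n) t c := by
  rw [esymmAlgHomMonomial, esymmAlgHom_apply, aeval_monomial,
    Finsupp.prod_fintype _ _ (by simp), hm]
  simp [deh_ehsp, map_mul, map_prod, map_pow]

lemma hm_mem (d : ℕ) (t : Fin n →₀ ℕ) (c : A) :
    hm d t c ∈ Algebra.adjoin A (Set.range fun k : Fin (n + 1) => ehsp A n (k : ℕ)) := by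
  refine mul_mem (Subalgebra.algebraMap_mem _ c) (mul_mem (pow_mem ?_ _)
    (prod_mem fun i _ => pow_mem ?_ _))
  · exact Algebra.subset_adjoin ⟨0, rfl⟩
  · exact Algebra.subset_adjoin ⟨i.succ, by simp⟩

open AddMonoidAlgebra in
lemma key (hn : 1 ≤ n) (d : ℕ) (f : MvPolynomial (Fin n × Fin 2) A)
    (hf : IsWeightedHomogeneous (wt n) f (fun _ => d)) (hs : (deh A n f).IsSymmetric) :
    f ∈ Algebra.adjoin A (Set.range fun k : Fin (n + 1) => ehsp A n (k : ℕ)) := by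
  obtain rfl | h0 := eq_or_ne f 0
  · exact Subalgebra.zero_mem _
  induction he : (deh A n f).supDegree toLex using WellFoundedLT.induction generalizing f with
  | _ t ih
  subst he
  set p := deh A n f with hp
  have hp0 : p ≠ 0 := deh_ne_zero hf h0
  let t := Finsupp.equivFunOnFinite.symm
    (Fin.invAccumulate n n <| ↑(ofLex <| p.supDegree toLex))
  have hacc : Fin.accumulate n n t = ↑(ofLex <| p.supDegree toLex) :=
    Fin.accumulate_invAccumulate le_rfl hs.antitone_supDegree
  have hd :
      (esymmAlgHomMonomial _ t <| p.leadingCoeff toLex).supDegree toLex = p.supDegree toLex := by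
    rw [← ofLex_inj, DFunLike.ext'_iff, supDegree_esymmAlgHomMonomial _ _ le_rfl]
    · exact hacc
    · rwa [Ne, leadingCoeff_eq_zero toLex.injective]
  have hsum : ∑ i, t i ≤ d := by
    have h1 := congrFun hacc ⟨0, hn⟩
    have h2 : ofLex (p.supDegree toLex) ∈ p.support := by
      rw [mem_support_iff]
      rwa [Ne, ← leadingCoeff_eq_zero toLex.injective, leadingCoeff_toLex] at hp0
    have h3 := le_of_mem_support_deh hf h2 ⟨0, hn⟩
    rw [← h1] at h3
    simpa [Fin.accumulate_apply] using h3
  have hQ := hm_mem d t (p.leadingCoeff toLex)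
  have hQd := hm_deh d t (p.leadingCoeff toLex)
  have hQh := hm_hom hsum (p.leadingCoeff toLex)
  set Q := hm d t (p.leadingCoeff toLex)
  obtain he | hne := eq_or_ne f Q
  · rw [he]; exact hQ
  have hfQ := hf.sub hQh
  have hfQd : deh A n (f - Q) = p - esymmAlgHomMonomial _ t (p.leadingCoeff toLex) := by
    rw [map_sub, hQd]
  have hne' : p ≠ esymmAlgHomMonomial _ t (p.leadingCoeff toLex) := by
    rw [← sub_ne_zero, ← hfQd]
    exact deh_ne_zero hfQ (sub_ne_zero.2 hne)
  have := (supDegree_sub_lt_of_leadingCoeff_eq toLex.injective hd.symm ?_).resolve_right hne'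
  · have := ih _ this (f - Q) hfQ
      (by rw [hfQd]; exact hs.sub (isSymmetric_esymmAlgHomMonomial _ _))
      (sub_ne_zero.2 hne) (by rw [hfQd])
    simpa using add_mem this hQ
  · rw [leadingCoeff_esymmAlgHomMonomial t le_rfl]

end EhspAux

/-- Let `S_n` act on `A[x_{01},…,x_{1n}]` by permuting the index `i` of the
pairs `(x_{0i}, x_{1i})`. If `f` is `S_n`-invariant and there is a `d ≥ 0` such that every
monomial of `f` has total degree `d` in the pair `(x_{0i}, x_{1i})` for each `i`, then `f`
lies in the `A`-subalgebra generated by `p_0, …, p_n`. -/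
theorem invariant_mem_adjoin_ehsp (A : Type*) [CommRing A] (n : ℕ) (hn : 1 ≤ n)
    (f : MvPolynomial (Fin n × Fin 2) A)
    (hinv : ∀ σ : Equiv.Perm (Fin n),
      rename (fun q : Fin n × Fin 2 => (σ q.1, q.2)) f = f)
    (d : ℕ)
    (hd : ∀ m ∈ f.support, ∀ i : Fin n, m (i, (0 : Fin 2)) + m (i, (1 : Fin 2)) = d) :
    f ∈ Algebra.adjoin A (Set.range fun k : Fin (n + 1) => ehsp A n (k : ℕ)) := by
  exact EhspAux.key hn d f
    (fun m hm => funext fun i => by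
      rw [EhspAux.weight_wt]; exact hd m (mem_support_iff.2 hm) i)
    (EhspAux.deh_symm hinv)
end

section
/- Let A be a nontrivial commutative ring and n ≥ 1. The A-algebra homomorphism φ: A[y_0, …, y_n] → A[x_{01},x_{11},…,x_{0n},x_{1n}] defined by φ(y_k) = p_k(x) for k = 0, …, n is injective, and its image consists exactly of those polynomials f that are S_n-invariant and such that every monomial of f has the same total degree in the pair (x_{0i}, x_{1i}) for each i = 1, …, n. -/
open MvPolynomial

namespace EhspAux

section
variable {A : Type*} [CommRing A] {n : ℕ}

/-- Evaluation at elementary symmetric polynomials. -/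
noncomputable def E (A : Type*) [CommRing A] (n : ℕ) :
    MvPolynomial (Fin n) A →ₐ[A] MvPolynomial (Fin n) A :=
  aeval (fun i : Fin n => esymm (Fin n) A (i + 1))

lemma E_eq (p : MvPolynomial (Fin n) A) : E A n p = (esymmAlgHom (Fin n) A n p).val :=
  (esymmAlgHom_apply p).symm

lemma E_inj : Function.Injective (E A n) := by
  intro p q h
  rw [E_eq, E_eq] at h
  exact esymmAlgHom_fin_injective A le_rfl (Subtype.ext h)

lemma E_surj {p : MvPolynomial (Fin n) A} (hp : p.IsSymmetric) : ∃ q, E A n q = p := by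
  obtain ⟨q, hq⟩ := (esymmAlgHom_fin_bijective A n).2 ⟨p, hp⟩
  exact ⟨q, by rw [E_eq, hq]⟩

lemma lex_zero_le [NeZero n] {a b : Lex (Fin n →₀ ℕ)} (h : a ≤ b) :
    (ofLex a) 0 ≤ (ofLex b) 0 := by
  rcases h.eq_or_lt with rfl | h
  · rfl
  · obtain ⟨i, h1, h2⟩ := h
    rcases eq_or_ne i 0 with rfl | hi
    · exact le_of_lt h2
    · exact (h1 0 (Fin.pos_iff_ne_zero.2 hi)).le

lemma degree_lemma [NeZero n] (G : MvPolynomial (Fin n) A) (u : Fin n →₀ ℕ) (hu : u ∈ G.support) :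
    ∃ s ∈ (E A n G).support, ∑ i, u i ≤ s 0 := by
  classical
  obtain ⟨i, hi, he⟩ := Finset.exists_mem_eq_sup G.support ⟨u, hu⟩
    (fun t => AddMonoidAlgebra.supDegree toLex (esymmAlgHomMonomial (Fin n) t (coeff t G)))
  have hle : ∀ t ∈ G.support, AddMonoidAlgebra.supDegree toLex
      (esymmAlgHomMonomial (Fin n) t (coeff t G)) ≤
      AddMonoidAlgebra.supDegree toLex (esymmAlgHomMonomial (Fin n) i (coeff i G)) := by
    intro t ht
    rw [← he]
    exact Finset.le_sup (f := fun t => AddMonoidAlgebra.supDegree toLex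
      (esymmAlgHomMonomial (Fin n) t (coeff t G))) ht
  have hdeg : ∀ t ∈ G.support, ∑ j, t j = (ofLex (AddMonoidAlgebra.supDegree toLex
      (esymmAlgHomMonomial (Fin n) t (coeff t G)))) 0 := by
    intro t ht
    rw [supDegree_esymmAlgHomMonomial (mem_support_iff.1 ht) t le_rfl]
    simp
  have hsum : E A n G = ∑ t ∈ G.support, esymmAlgHomMonomial (Fin n) t (coeff t G) := by
    conv_lhs => rw [G.as_sum, map_sum]
    exact Finset.sum_congr rfl fun t _ => E_eq _
  have hmax := AddMonoidAlgebra.supDegree_leadingCoeff_sum_eq (D := toLex) (s := G.support)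
    (f := fun t => esymmAlgHomMonomial (Fin n) t (coeff t G)) hi (by
      intro t ht hne
      refine lt_of_le_of_ne (hle t ht) fun h => hne ?_
      apply DFunLike.ext'
      apply Fin.accumulate_injective le_rfl
      rw [← supDegree_esymmAlgHomMonomial (mem_support_iff.1 ht) t le_rfl,
        ← supDegree_esymmAlgHomMonomial (mem_support_iff.1 hi) i le_rfl, h])
  have hne : E A n G ≠ 0 := by
    intro h
    rw [← map_zero (E A n)] at h
    rw [E_inj h] at hu
    simp at hu
  obtain ⟨s, hs, hs2⟩ := AddMonoidAlgebra.exists_supDegree_mem_support toLex hne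
  refine ⟨s, hs, ?_⟩
  rw [hsum, hmax.1] at hs2
  rw [hdeg u hu]
  have := lex_zero_le (hle u hu)
  rw [hs2] at this
  exact this

/-- Dehomogenization. -/
noncomputable def D (A : Type*) [CommRing A] (n : ℕ) :
    MvPolynomial (Fin n × Fin 2) A →ₐ[A] Polynomial (MvPolynomial (Fin n) A) :=
  aeval (fun q => Polynomial.X * Polynomial.C (if q.2 = 0 then 1 else X q.1))

/-- Total degree. -/
def dg (m : Fin n × Fin 2 →₀ ℕ) : ℕ := ∑ i, (m (i, 0) + m (i, 1))

/-- Second-row exponents. -/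
noncomputable def sn (m : Fin n × Fin 2 →₀ ℕ) : Fin n →₀ ℕ :=
  Finsupp.equivFunOnFinite.symm fun i => m (i, 1)

lemma D_monomial (m : Fin n × Fin 2 →₀ ℕ) (c : A) :
    D A n (monomial m c) = Polynomial.monomial (dg m) (monomial (sn m) c) := by
  have h1 : monomial (sn m) c = C c * ∏ i, (X i : MvPolynomial (Fin n) A) ^ m (i, 1) := by
    rw [monomial_eq, Finsupp.prod_fintype _ _ (by simp)]
    simp [sn]
  rw [D, aeval_monomial, Finsupp.prod_fintype _ _ (by simp), Fintype.prod_prod_type]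
  simp only [Fin.prod_univ_two, mul_pow]
  rw [h1, ← Polynomial.C_mul_X_pow_eq_monomial, dg, ← Finset.prod_pow_eq_pow_sum, map_mul, map_prod,
    mul_assoc, ← Finset.prod_mul_distrib]
  have hc : algebraMap A (Polynomial (MvPolynomial (Fin n) A)) c = Polynomial.C (C c) := rfl
  rw [hc]
  refine congrArg (Polynomial.C (C c) * ·) ?_
  apply Finset.prod_congr rfl
  intro i _
  simp [pow_add]
  ring

lemma D_apply (f : MvPolynomial (Fin n × Fin 2) A) :
    D A n f = ∑ m ∈ f.support, Polynomial.monomial (dg m) (monomial (sn m) (coeff m f)) := by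
  conv_lhs => rw [f.as_sum, map_sum]
  exact Finset.sum_congr rfl fun t _ => D_monomial _ _

/-- Balanced exponents. -/
def Bal (m : Fin n × Fin 2 →₀ ℕ) : Prop := ∀ i j : Fin n, m (i, 0) + m (i, 1) = m (j, 0) + m (j, 1)

lemma Bal.dg {m : Fin n × Fin 2 →₀ ℕ} (h : Bal m) (i : Fin n) :
    dg m = n * (m (i, 0) + m (i, 1)) := by
  rw [EhspAux.dg, Finset.sum_congr rfl fun j _ => h j i]
  simp

lemma Bal.ext (hn : 1 ≤ n) {m m' : Fin n × Fin 2 →₀ ℕ} (h : Bal m) (h' : Bal m')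
    (hd : EhspAux.dg m = EhspAux.dg m') (hs : sn m = sn m') : m = m' := by
  have h1 : ∀ i, m (i, 1) = m' (i, 1) := fun i => DFunLike.congr_fun hs i
  have h0 : ∀ i, m (i, 0) = m' (i, 0) := fun i => by
    rw [h.dg i, h'.dg i] at hd
    have := Nat.eq_of_mul_eq_mul_left hn hd
    have := h1 i
    omega
  ext ⟨i, j⟩
  fin_cases j
  · exact h0 i
  · exact h1 i

lemma D_inj (hn : 1 ≤ n) {f : MvPolynomial (Fin n × Fin 2) A} (hf : ∀ m ∈ f.support, Bal m)
    (h : D A n f = 0) : f = 0 := by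
  classical
  by_contra hne
  obtain ⟨m, hm⟩ := support_nonempty.2 hne
  have := congrArg (fun p => coeff (sn m) (Polynomial.coeff p (dg m))) h
  simp only [D_apply, Polynomial.finsetSum_coeff, Polynomial.coeff_monomial, coeff_sum,
    Polynomial.coeff_zero, coeff_zero] at this
  rw [Finset.sum_eq_single m] at this
  · simp at this
    exact mem_support_iff.1 hm this
  · intro b hb hbm
    split_ifs with h1
    · rw [coeff_monomial, if_neg]
      exact fun h2 => hbm (Bal.ext hn (hf b hb) (hf m hm) h1 h2)
    · simp
  · intro h; exact absurd hm h

lemma D_supp (f : MvPolynomial (Fin n × Fin 2) A) (N : ℕ) (s : Fin n →₀ ℕ)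
    (hs : s ∈ ((D A n f).coeff N).support) : ∃ m ∈ f.support, dg m = N ∧ sn m = s := by
  classical
  by_contra! hcon
  apply mem_support_iff.1 hs
  simp only [D_apply, Polynomial.finsetSum_coeff, Polynomial.coeff_monomial, coeff_sum]
  apply Finset.sum_eq_zero
  intro m hm
  split_ifs with h1
  · rw [coeff_monomial, if_neg (hcon m hm h1)]
  · simp

/-- The map of the theorem. -/
noncomputable def φ (A : Type*) [CommRing A] (n : ℕ) :
    MvPolynomial (Fin (n + 1)) A →ₐ[A] MvPolynomial (Fin n × Fin 2) A :=
  aeval (fun k : Fin (n + 1) => ehsp A n (k : ℕ))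

lemma D_ehsp (k : ℕ) : D A n (ehsp A n k) = Polynomial.X ^ n * Polynomial.C (esymm (Fin n) A k) := by
  rw [ehsp, esymm, map_sum, map_sum, Finset.mul_sum]
  apply Finset.sum_congr rfl
  intro S _
  have hc : Sᶜ.card + S.card = n := by simp
  simp only [D, map_mul, map_prod, aeval_X]
  simp only [Finset.prod_mul_distrib, Finset.prod_const]
  have hX : (Polynomial.X : Polynomial (MvPolynomial (Fin n) A)) ^ n =
      Polynomial.X ^ Sᶜ.card * Polynomial.X ^ S.card := by rw [← pow_add, hc]
  rw [hX]
  simp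
  ring

lemma Dφ_monomial (v : Fin (n + 1) →₀ ℕ) (c : A) :
    D A n (φ A n (monomial v c)) =
      Polynomial.monomial (n * ∑ k, v k) (E A n (monomial v.tail c)) := by
  rw [φ, E, aeval_monomial, aeval_monomial, map_mul, Finsupp.prod_fintype _ _ (by simp),
    Finsupp.prod_fintype _ _ (by simp), map_prod]
  simp only [map_pow, D_ehsp]
  rw [← Polynomial.C_mul_X_pow_eq_monomial, pow_mul, ← Finset.prod_pow_eq_pow_sum]
  simp only [mul_pow, Finset.prod_mul_distrib]
  rw [Fin.prod_univ_succ (fun i => Polynomial.C (esymm (Fin n) A ↑i) ^ v i)]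
  simp
  simp [Finsupp.tail_apply]
  ring

lemma φ_inj (hn : 1 ≤ n) : Function.Injective (φ A n) := by
  classical
  rw [injective_iff_map_eq_zero]
  intro F hF
  by_contra hne
  obtain ⟨v, hv⟩ := support_nonempty.2 hne
  have h1 : D A n (φ A n F) = ∑ w ∈ F.support,
      Polynomial.monomial (n * ∑ k, w k) (E A n (monomial w.tail (coeff w F))) := by
    conv_lhs => rw [F.as_sum, map_sum, map_sum]
    exact Finset.sum_congr rfl fun t _ => Dφ_monomial _ _
  rw [hF, map_zero] at h1
  have h2 := congrArg (fun p => Polynomial.coeff p (n * ∑ k, v k)) h1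
  simp only [Polynomial.finsetSum_coeff, Polynomial.coeff_monomial, Polynomial.coeff_zero] at h2
  have h3 : E A n (∑ w ∈ F.support, if n * ∑ k, w k = n * ∑ k, v k then
      monomial w.tail (coeff w F) else 0) = E A n 0 := by
    rw [map_zero, map_sum]; refine Eq.trans ?_ h2.symm
    refine Finset.sum_congr rfl fun w _ => ?_
    split_ifs <;> simp
  have h4 := congrArg (coeff v.tail) (E_inj h3)
  rw [coeff_sum, Finset.sum_eq_single v] at h4
  · simp at h4
    exact mem_support_iff.1 hv h4
  · intro w hw hwv
    split_ifs with h
    · rw [coeff_monomial, if_neg]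
      intro ht
      apply hwv
      have h5 := Nat.eq_of_mul_eq_mul_left hn h
      have ht' : ∀ i : Fin n, w i.succ = v i.succ := fun i => DFunLike.congr_fun ht i
      rw [Fin.sum_univ_succ, Fin.sum_univ_succ, Finset.sum_congr rfl fun i _ => ht' i] at h5
      ext i
      refine Fin.cases ?_ ht' i
      omega
    · simp
  · intro h; exact absurd hv h

/-- The subalgebra of balanced symmetric polynomials. -/
noncomputable def T (A : Type*) [CommRing A] (n : ℕ) :
    Subalgebra A (MvPolynomial (Fin n × Fin 2) A) where
  carrier := {f | (∀ σ : Equiv.Perm (Fin n),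
      rename (fun q : Fin n × Fin 2 => (σ q.1, q.2)) f = f) ∧ ∀ m ∈ f.support, Bal m}
  mul_mem' := by
    classical
    rintro f g ⟨hf, hf2⟩ ⟨hg, hg2⟩
    refine ⟨fun σ => by rw [map_mul, hf, hg], fun m hm => ?_⟩
    obtain ⟨a, ha, b, hb, rfl⟩ := Finset.mem_add.1 (support_mul f g hm)
    intro i j
    have := hf2 a ha i j
    have := hg2 b hb i j
    simp only [Finsupp.add_apply]
    omega
  add_mem' := by
    classical
    rintro f g ⟨hf, hf2⟩ ⟨hg, hg2⟩
    refine ⟨fun σ => by rw [map_add, hf, hg], fun m hm => ?_⟩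
    rcases Finset.mem_union.1 (support_add hm) with h | h
    · exact hf2 m h
    · exact hg2 m h
  algebraMap_mem' := by
    classical
    intro r
    refine ⟨fun σ => by rw [algebraMap_eq, rename_C], fun m hm => ?_⟩
    rw [algebraMap_eq, mem_support_iff, coeff_C] at hm
    have : 0 = m := by
      by_contra h
      exact hm (if_neg h)
    subst this
    intro i j
    simp

lemma ehsp_mem (k : ℕ) : ehsp A n k ∈ T A n := by
  classical
  constructor
  · intro σ
    simp only [ehsp, map_sum, map_mul, map_prod, rename_X]
    refine Finset.sum_equiv (Equiv.finsetCongr σ) ?_ ?_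
    · intro S
      simp [Finset.mem_powersetCard]
    · intro S _
      have : (Equiv.finsetCongr σ S)ᶜ = Equiv.finsetCongr σ (Sᶜ) := by
        ext x
        simp
      rw [this]
      simp
  · intro m hm
    obtain ⟨S, hS, hm⟩ := Finset.mem_biUnion.1 (support_sum hm)
    have h : (∏ i ∈ Sᶜ, X (i, (0 : Fin 2))) * ∏ i ∈ S, X (i, (1 : Fin 2)) =
        (monomial (∑ i, Finsupp.single (i, if i ∈ S then (1 : Fin 2) else 0) 1) (1 : A)) := by
      rw [monomial_sum_one, ← Finset.prod_compl_mul_prod S]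
      refine congrArg₂ (· * ·) ?_ ?_
      · refine Finset.prod_congr rfl fun i hi => ?_
        rw [if_neg (Finset.mem_compl.1 hi)]; rfl
      · refine Finset.prod_congr rfl fun i hi => ?_
        rw [if_pos hi]; rfl
    rw [h] at hm
    have := Finset.mem_singleton.1 (support_monomial_subset hm)
    have hone : ∀ i, m (i, 0) + m (i, 1) = 1 := by
      intro i
      subst this
      simp only [Finsupp.finsetSum_apply, Finsupp.single_apply, Prod.mk.injEq]
      rw [Finset.sum_eq_single i, Finset.sum_eq_single i]
      · by_cases h : i ∈ S <;> simp [h]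
      · intro b _ hb; simp [hb]
      · simp
      · intro b _ hb; simp [hb]
      · simp
    intro i j
    rw [hone, hone]

lemma φ_mem (F : MvPolynomial (Fin (n + 1)) A) : φ A n F ∈ T A n := by
  induction F using MvPolynomial.induction_on with
  | C a => rw [← algebraMap_eq, AlgHom.commutes]; exact Subalgebra.algebraMap_mem _ _
  | add p q hp hq => rw [map_add]; exact Subalgebra.add_mem _ hp hq
  | mul_X p i hp =>
    rw [map_mul]
    refine Subalgebra.mul_mem _ hp ?_
    rw [φ, aeval_X]
    exact ehsp_mem _

lemma D_symm (f : MvPolynomial (Fin n × Fin 2) A) (σ : Equiv.Perm (Fin n)) :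
    D A n (rename (fun q : Fin n × Fin 2 => (σ q.1, q.2)) f) =
      Polynomial.mapAlgHom (rename σ) (D A n f) := by
  have : (D A n).comp (rename (fun q : Fin n × Fin 2 => (σ q.1, q.2))) =
      (Polynomial.mapAlgHom (rename σ)).comp (D A n) := by
    apply algHom_ext
    rintro ⟨i, j⟩
    fin_cases j <;> simp [D]
  exact DFunLike.congr_fun this f

lemma coeff_D_symm {f : MvPolynomial (Fin n × Fin 2) A} (hf : f ∈ T A n) (N : ℕ) :
    ((D A n f).coeff N).IsSymmetric := by
  intro σ
  have := D_symm f σ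
  rw [hf.1 σ] at this
  conv_rhs => rw [this]
  simp [Polynomial.coeff_map]

lemma piece (hn : 1 ≤ n) {f : MvPolynomial (Fin n × Fin 2) A} (hf : f ∈ T A n) (N : ℕ) :
    Polynomial.monomial N ((D A n f).coeff N) ∈ ((D A n).comp (φ A n)).range := by
  classical
  have : NeZero n := ⟨by omega⟩
  by_cases h0 : (D A n f).coeff N = 0
  · rw [h0, map_zero]; exact Subalgebra.zero_mem _
  obtain ⟨s, hs⟩ := support_nonempty.2 h0
  obtain ⟨m, hm, hmN, -⟩ := D_supp f N s hs
  set d := m (0, 0) + m (0, 1) with hd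
  have hN : N = n * d := by rw [← hmN, (hf.2 m hm).dg 0]
  have hbd : ∀ s ∈ ((D A n f).coeff N).support, s 0 ≤ d := by
    intro s hs
    obtain ⟨m', hm', hmN', rfl⟩ := D_supp f N s hs
    rw [(hf.2 m' hm').dg 0, hN] at hmN'
    have := Nat.eq_of_mul_eq_mul_left hn hmN'
    have h2 : sn m' 0 = m' (0, 1) := rfl
    omega
  obtain ⟨G, hG⟩ := E_surj (coeff_D_symm hf N)
  have hGd : ∀ u ∈ G.support, ∑ i, u i ≤ d := by
    intro u hu
    obtain ⟨s, hs, hus⟩ := degree_lemma G u hu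
    rw [hG] at hs
    exact hus.trans (hbd s hs)
  rw [← hG, G.as_sum, map_sum, map_sum]
  refine Subalgebra.sum_mem _ fun u hu => ?_
  refine ⟨monomial (Finsupp.cons (d - ∑ i, u i) u) (coeff u G), ?_⟩
  have h5 := Dφ_monomial (Finsupp.cons (d - ∑ i, u i) u) (coeff u G)
  have h6 : ∑ k, (Finsupp.cons (d - ∑ i, u i) u) k = d := by
    rw [Fin.sum_univ_succ]
    simp only [Finsupp.cons_zero, Finsupp.cons_succ]
    have := hGd u hu
    omega
  rw [h6, ← hN, Finsupp.tail_cons] at h5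
  exact h5

lemma φ_surj (hn : 1 ≤ n) {f : MvPolynomial (Fin n × Fin 2) A} (hf : f ∈ T A n) :
    ∃ F, φ A n F = f := by
  have h : D A n f ∈ ((D A n).comp (φ A n)).range := by
    rw [(D A n f).as_sum_support]
    exact Subalgebra.sum_mem _ fun N _ => piece hn hf N
  obtain ⟨F, hF⟩ := h
  refine ⟨F, sub_eq_zero.1 (D_inj hn (Subalgebra.sub_mem _ (φ_mem F) hf).2 ?_)⟩
  rw [map_sub, sub_eq_zero]
  exact hF

end
end EhspAux

/-- For a nontrivial commutative ring `A` and `n ≥ 1`, the `A`-algebra map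
`φ : A[y_0, …, y_n] → A[x_{01},…,x_{1n}]`, `φ(y_k) = p_k(x)`, is injective, and its image
consists exactly of the `S_n`-invariant polynomials `f` such that every monomial of `f`
has the same total degree in the pair `(x_{0i}, x_{1i})` for each `i`. -/
theorem ehsp_aeval_injective_range (A : Type*) [CommRing A] [Nontrivial A] (n : ℕ)
    (hn : 1 ≤ n) :
    Function.Injective
        (aeval (fun k : Fin (n + 1) => ehsp A n (k : ℕ)) :
          MvPolynomial (Fin (n + 1)) A →ₐ[A] MvPolynomial (Fin n × Fin 2) A) ∧
      Set.range
          (aeval (fun k : Fin (n + 1) => ehsp A n (k : ℕ)) :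
            MvPolynomial (Fin (n + 1)) A →ₐ[A] MvPolynomial (Fin n × Fin 2) A) =
        {f : MvPolynomial (Fin n × Fin 2) A |
          (∀ σ : Equiv.Perm (Fin n),
            rename (fun q : Fin n × Fin 2 => (σ q.1, q.2)) f = f) ∧
          ∀ m ∈ f.support, ∀ i j : Fin n,
            m (i, (0 : Fin 2)) + m (i, (1 : Fin 2)) =
              m (j, (0 : Fin 2)) + m (j, (1 : Fin 2))} := by
  refine ⟨EhspAux.φ_inj hn, ?_⟩
  ext f
  constructor
  · rintro ⟨F, rfl⟩
    exact EhspAux.φ_mem F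
  · intro hf
    exact EhspAux.φ_surj hn (f := f) hf
end

section
/- Let k be an algebraically closed field of characteristic zero, let n, m ≥ 1, and let R = k[v_0, …, v_n, w_0, …, w_m] be the polynomial ring in n+m+2 independent variables. Let f(Z) = v_0 Z^n + ⋯ + v_n and g(Z) = w_0 Z^m + ⋯ + w_m over R. Then the resultant Res_{n,m}(f, g) is an irreducible element of R. -/
open Polynomial

namespace GR

noncomputable def gen {R : Type*} [CommRing R] (n : ℕ) (v : Fin (n + 1) → R) : R[X] :=
  ∑ i : Fin (n + 1), Polynomial.C (v i) * Polynomial.X ^ (n - (i : ℕ))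

lemma gen_map {R S : Type*} [CommRing R] [CommRing S] (n : ℕ) (v : Fin (n + 1) → R)
    (φ : R →+* S) : (gen n v).map φ = gen n (fun i => φ (v i)) := by
  simp [gen, Polynomial.map_sum]

lemma gen_natDegree_le {R : Type*} [CommRing R] (n : ℕ) (v : Fin (n + 1) → R) :
    (gen n v).natDegree ≤ n := by
  unfold gen
  refine natDegree_sum_le_of_forall_le _ _ fun i _ => ?_
  exact (natDegree_C_mul_X_pow_le _ _).trans (Nat.sub_le _ _)

lemma gen_coeff {R : Type*} [CommRing R] (n : ℕ) (v : Fin (n + 1) → R) (l : ℕ) (hl : l ≤ n) :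
    (gen n v).coeff l = v ⟨n - l, by omega⟩ := by
  unfold gen
  rw [finsetSum_coeff, Finset.sum_eq_single ⟨n - l, by omega⟩]
  · simp [coeff_X_pow]; omega
  · intro i _ hi
    have : l ≠ n - (i : ℕ) := by
      intro h; apply hi; ext; simp; omega
    simp [coeff_X_pow, this]
  · simp

lemma gen_coeff_self {R : Type*} [CommRing R] (n : ℕ) (f : R[X]) (hf : f.natDegree ≤ n) :
    gen n (fun i => f.coeff (n - (i : ℕ))) = f := by
  ext l
  by_cases hl : l ≤ n
  · rw [gen_coeff _ _ _ hl]; simp only; congr 1; omega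
  · rw [coeff_eq_zero_of_natDegree_lt ((gen_natDegree_le _ _).trans_lt (not_le.1 hl)),
      coeff_eq_zero_of_natDegree_lt (hf.trans_lt (not_le.1 hl))]

lemma common_root {S : Type*} [CommRing S] (n m : ℕ) (hn : n ≠ 0) (f g : S[X])
    (hf : f.natDegree ≤ n) (hg : g.natDegree ≤ m) (s : S) (h1 : f.eval s = 0)
    (h2 : g.eval s = 0) : resultant f g n m = 0 := by
  obtain ⟨p, q, -, -, h⟩ := exists_mul_add_mul_eq_C_resultant (m := n) (n := m) f g hf hg (Or.inl hn)
  have := congrArg (eval s) h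
  simpa [h1, h2] using this.symm

lemma degreeOf_det_le {k σ : Type*} [Field k] {N : ℕ} (x : σ)
    (M : Matrix (Fin N) (Fin N) (MvPolynomial σ k)) (d : Fin N → ℕ)
    (h : ∀ i j, (M i j).degreeOf x ≤ d j) : M.det.degreeOf x ≤ ∑ j, d j := by
  rw [Matrix.det_apply]
  refine (MvPolynomial.degreeOf_sum_le _ _ _).trans (Finset.sup_le fun p _ => ?_)
  have : ((Equiv.Perm.sign p) • ∏ i, M (p i) i).degreeOf x ≤ (∏ i, M (p i) i).degreeOf x := by
    rcases Int.units_eq_one_or (Equiv.Perm.sign p) with h | h <;> simp [h, Units.smul_def]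
  refine this.trans ((MvPolynomial.degreeOf_prod_le _ _ _).trans ?_)
  exact Finset.sum_le_sum fun i _ => h _ _

lemma natDegree_aeval_le {k σ : Type*} [Field k] [DecidableEq σ] (x : σ) (u : σ → k[X])
    (hu : ∀ z, (u z).natDegree ≤ if z = x then 1 else 0) (A : MvPolynomial σ k) :
    (MvPolynomial.aeval u A).natDegree ≤ A.degreeOf x := by
  rw [MvPolynomial.aeval_def, MvPolynomial.eval₂_eq]
  refine natDegree_sum_le_of_forall_le _ _ fun d hd => ?_
  refine (natDegree_C_mul_le _ _).trans ?_
  refine (natDegree_prod_le _ _).trans ?_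
  refine le_trans ?_ (MvPolynomial.monomial_le_degreeOf x hd)
  calc ∑ i ∈ d.support, (u i ^ d i).natDegree ≤ ∑ i ∈ d.support, if i = x then d x else 0 := by
        refine Finset.sum_le_sum fun i _ => natDegree_pow_le.trans ?_
        have := hu i
        split_ifs with h
        · subst h; simp at this; nlinarith
        · simp [h] at this; simp [this]
    _ ≤ d x := by
        rw [Finset.sum_ite_eq']; split_ifs <;> simp

lemma spec_exists (k : Type*) [Field k] [CharZero k] (n m b : ℕ) (hm : 1 ≤ m) (hb : b ≤ m) :
    ∃ (f : k[X]) (g : k[X][X]) (e : Fin n → k), Function.Injective e ∧ f.natDegree ≤ n ∧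
      g.natDegree ≤ m ∧ resultant (f.map C) g n m ≠ 0 ∧
      (∀ l, (g.coeff l).natDegree ≤ if l = b then 1 else 0) ∧
      ∀ i, ∃ s, f.eval s = 0 ∧ (g.map (evalRingHom (e i))).eval s = 0 := by
  obtain ⟨a, ha, hab⟩ : ∃ a, a ≤ m ∧ (a = b + 1 ∨ b = a + 1) := by
    by_cases h : b < m
    · exact ⟨b + 1, h, Or.inl rfl⟩
    · exact ⟨b - 1, by omega, by omega⟩
  obtain ⟨t, ht, htinj⟩ : ∃ t : ℕ → k, (∀ i, t i ≠ 0) ∧ Function.Injective t :=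
    ⟨fun i => ((i + 1 : ℕ) : k), fun i => Nat.cast_ne_zero.2 (Nat.succ_ne_zero i),
      fun i j h => by simpa using h⟩
  have hgd : (C (X : k[X]) * X ^ b - X ^ a : k[X][X]).natDegree ≤ m := by
    refine (natDegree_sub_le _ _).trans (max_le ?_ ?_)
    · exact (natDegree_C_mul_X_pow_le _ _).trans hb
    · simpa using ha
  refine ⟨∏ i : Fin n, (X - C (t i)), C (X : k[X]) * X ^ b - X ^ a,
    fun i => (t i) ^ a / (t i) ^ b, ?_, ?_, hgd, ?_, ?_, ?_⟩
  · intro i j hij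
    simp only at hij
    have hi := ht i
    have hj := ht j
    have : t i = t j := by
      rcases hab with rfl | rfl
      · rw [pow_succ, pow_succ] at hij
        field_simp at hij
        exact hij
      · rw [pow_succ, pow_succ] at hij
        field_simp at hij
        exact hij.symm
    ext
    exact htinj this
  · rw [natDegree_prod_of_monic _ _ (fun i _ => monic_X_sub_C _)]; simp
  · have hd : (∏ i : Fin n, (X - C (C (t i)) : k[X][X])).natDegree = n := by
      rw [natDegree_prod_of_monic _ _ (fun i _ => monic_X_sub_C _)]; simp
    have h := resultant_prod_left Finset.univ
      (fun i : Fin n => (X - C (C (t i)) : k[X][X])) (C (X : k[X]) * X ^ b - X ^ a) m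
      (by simp) hgd
    rw [hd] at h
    have hmap : (∏ i : Fin n, (X - C (t i))).map C =
        (∏ i : Fin n, (X - C (C (t i)) : k[X][X])) := by
      rw [Polynomial.map_prod]
      exact Finset.prod_congr rfl fun i _ => by
        rw [Polynomial.map_sub, Polynomial.map_X, Polynomial.map_C]
    rw [hmap, h, Finset.prod_ne_zero_iff]
    intro i _
    rw [natDegree_X_sub_C, resultant_X_sub_C_left _ _ _ hgd]
    intro h0
    have := congrArg (fun p => p.coeff 1) h0
    simp [← map_pow, coeff_X_mul, coeff_C] at this
    exact ht i this.1
  · intro l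
    rw [coeff_sub, coeff_C_mul, coeff_X_pow, coeff_X_pow]
    have : a ≠ b := by omega
    split_ifs <;> simp_all
  · intro i
    refine ⟨t i, ?_, ?_⟩
    · rw [eval_prod]; exact Finset.prod_eq_zero (Finset.mem_univ i) (by simp)
    · have := ht i
      simp
      field_simp
      simp

lemma res_eq {R : Type*} [CommRing R] (n m : ℕ) (f g : R[X]) :
    ∃ ε : ℤˣ, res n m f g = ((ε : ℤ) : R) * resultant g f m n := by
  let σ : Equiv.Perm (Fin (m + n)) := finSumFinEquiv.symm.trans
    ((Equiv.sumCongr Fin.revPerm Fin.revPerm).trans finSumFinEquiv)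
  have : _root_.sylvester n m f g =
      (((Polynomial.sylvester g f m n).transpose).submatrix σ id).submatrix id Fin.revPerm := by
    ext i j
    induction i using Fin.addCases with
    | left i =>
      simp [_root_.sylvester, Polynomial.sylvester, σ]
      have h1 := i.2
      have h2 := j.2
      split_ifs <;> first | omega | rfl | (congr 1; omega)
    | right i =>
      simp [_root_.sylvester, Polynomial.sylvester, σ]
      have h1 := i.2
      have h2 := j.2
      split_ifs <;> first | omega | rfl | (congr 1; omega)
  refine ⟨Equiv.Perm.sign (Fin.revPerm (n := m + n)) * Equiv.Perm.sign σ, ?_⟩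
  rw [res, this, Matrix.det_permute', Matrix.det_permute, Matrix.det_transpose, resultant]
  push_cast
  ring

section
variable {k : Type*} [Field k] (n m : ℕ)

noncomputable def spec {S : Type*} [CommRing S] [Algebra k S] (f g : S[X]) :
    MvPolynomial (Fin (n + 1) ⊕ Fin (m + 1)) k →ₐ[k] S :=
  MvPolynomial.aeval (Sum.elim (fun i => f.coeff (n - (i : ℕ))) (fun j => g.coeff (m - (j : ℕ))))

variable (k) in
noncomputable def F : (MvPolynomial (Fin (n + 1) ⊕ Fin (m + 1)) k)[X] :=
  gen n (fun i => MvPolynomial.X (Sum.inl i))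

variable (k) in
noncomputable def G : (MvPolynomial (Fin (n + 1) ⊕ Fin (m + 1)) k)[X] :=
  gen m (fun i => MvPolynomial.X (Sum.inr i))

lemma F_map {S : Type*} [CommRing S] [Algebra k S] (f g : S[X]) (hf : f.natDegree ≤ n) :
    (F k n m).map (spec (k := k) n m f g : _ →+* S) = f := by
  rw [F, gen_map]
  conv_rhs => rw [← gen_coeff_self n f hf]
  simp [spec]

lemma G_map {S : Type*} [CommRing S] [Algebra k S] (f g : S[X]) (hg : g.natDegree ≤ m) :
    (G k n m).map (spec (k := k) n m f g : _ →+* S) = g := by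
  rw [G, gen_map]
  conv_rhs => rw [← gen_coeff_self m g hg]
  simp [spec]

lemma res_map {S : Type*} [CommRing S] [Algebra k S] (f g : S[X]) (hf : f.natDegree ≤ n)
    (hg : g.natDegree ≤ m) :
    spec n m f g (resultant (F k n m) (G k n m) n m) = resultant f g n m := by
  have h := resultant_map_map (F k n m) (G k n m) n m (spec (k := k) n m f g : _ →+* S)
  rw [F_map _ _ _ _ hf, G_map _ _ _ _ hg] at h
  exact h.symm

variable (k) in
noncomputable def F' : (MvPolynomial (Fin (n + 1) ⊕ Fin (m + 1)) k)[X][X] :=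
  (F k n m).map C - C (F k n m)

variable (k) in
noncomputable def G' : (MvPolynomial (Fin (n + 1) ⊕ Fin (m + 1)) k)[X][X] :=
  (G k n m).map C - C (G k n m)

lemma evalX {R : Type*} [CommRing R] (p : R[X]) : (p.map C - C p : R[X][X]).eval X = 0 := by
  rw [eval_sub, eval_C, eval_map, eval₂_C_X, sub_self]

lemma F'_deg : (F' k n m).natDegree ≤ n := by
  rw [F', natDegree_sub_C]
  exact natDegree_map_le.trans (gen_natDegree_le _ _)

lemma G'_deg : (G' k n m).natDegree ≤ m := by
  rw [G', natDegree_sub_C]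
  exact natDegree_map_le.trans (gen_natDegree_le _ _)

lemma phi_res (hn : n ≠ 0) :
    spec n m (F' k n m) (G' k n m) (resultant (F k n m) (G k n m) n m) = 0 := by
  rw [res_map _ _ _ _ (F'_deg n m) (G'_deg n m)]
  exact common_root _ _ hn _ _ (F'_deg n m) (G'_deg n m) X (evalX _) (evalX _)

lemma factor (f g : k[X]) (hf : f.natDegree ≤ n) (hg : g.natDegree ≤ m) (s : k)
    (h1 : f.eval s = 0) (h2 : g.eval s = 0) (A : MvPolynomial (Fin (n + 1) ⊕ Fin (m + 1)) k)
    (hA : spec n m (F' k n m) (G' k n m) A = 0) : spec n m f g A = 0 := by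
  let p : MvPolynomial (Fin (n + 1) ⊕ Fin (m + 1)) k →+* k := (spec (k := k) n m f g : _ →+* k)
  let ψ := eval₂RingHom p s
  have hpF : (F k n m).map p = f := F_map n m f g hf
  have hpG : (G k n m).map p = g := G_map n m f g hg
  have hψ : ψ.comp C = p := by ext <;> simp [ψ]
  have hF : (F' k n m).map ψ = f := by
    rw [F', Polynomial.map_sub, Polynomial.map_map, hψ, hpF, Polynomial.map_C]
    have : ψ (F k n m) = 0 := by
      simp only [ψ, coe_eval₂RingHom, ← eval_map, hpF, h1]
    simp [this]
  have hG : (G' k n m).map ψ = g := by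
    rw [G', Polynomial.map_sub, Polynomial.map_map, hψ, hpG, Polynomial.map_C]
    have : ψ (G k n m) = 0 := by
      simp only [ψ, coe_eval₂RingHom, ← eval_map, hpG, h2]
    simp [this]
  have key : ψ.comp (spec (k := k) n m (F' k n m) (G' k n m) : _ →+* _) = p := by
    apply MvPolynomial.ringHom_ext
    · intro r
      have : (spec n m (F' k n m) (G' k n m)) (MvPolynomial.C r) = C (MvPolynomial.C r) := by
        simp [spec]
      simp [this, ψ]
    · rintro (i | i)
      · simp only [RingHom.comp_apply, p, RingHom.coe_coe]
        simp only [spec, MvPolynomial.aeval_X, Sum.elim_inl]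
        rw [← coeff_map, hF]
      · simp only [RingHom.comp_apply, p, RingHom.coe_coe]
        simp only [spec, MvPolynomial.aeval_X, Sum.elim_inr]
        rw [← coeff_map, hG]
  have := congrArg (fun h => h A) key
  simp [hA] at this
  exact this.symm

lemma key_lemma (A : MvPolynomial (Fin (n + 1) ⊕ Fin (m + 1)) k)
    (hA : spec n m (F' k n m) (G' k n m) A = 0) (hd : A ∣ resultant (F k n m) (G k n m) n m)
    (x : Fin (n + 1) ⊕ Fin (m + 1)) (f g : k[X][X]) (hf : f.natDegree ≤ n)
    (hg : g.natDegree ≤ m) (hr : resultant f g n m ≠ 0)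
    (hfc : ∀ i : Fin (n + 1), (f.coeff (n - (i : ℕ))).natDegree ≤ if Sum.inl i = x then 1 else 0)
    (hgc : ∀ i : Fin (m + 1), (g.coeff (m - (i : ℕ))).natDegree ≤ if Sum.inr i = x then 1 else 0)
    (N : ℕ) (e : Fin N → k) (he : Function.Injective e)
    (h : ∀ i, ∃ s, (f.map (evalRingHom (e i))).eval s = 0 ∧
      (g.map (evalRingHom (e i))).eval s = 0) : N ≤ A.degreeOf x := by
  have hne : spec n m f g A ≠ 0 := by
    obtain ⟨B, hB⟩ := hd
    have := res_map (k := k) n m f g hf hg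
    rw [hB, map_mul] at this
    intro h0
    rw [h0, zero_mul] at this
    exact hr this.symm
  have hroot : ∀ i, (spec n m f g A).eval (e i) = 0 := by
    intro i
    obtain ⟨s, h1, h2⟩ := h i
    have := factor n m _ _ (natDegree_map_le.trans hf) (natDegree_map_le.trans hg) s h1 h2 A hA
    rw [← this, ← coe_evalRingHom]
    have key : (evalRingHom (e i)).comp (spec (k := k) n m f g : _ →+* k[X]) =
        (spec (k := k) n m (f.map (evalRingHom (e i))) (g.map (evalRingHom (e i))) : MvPolynomial (Fin (n + 1) ⊕ Fin (m + 1)) k →+* k) := by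
      apply MvPolynomial.ringHom_ext
      · intro r
        simp [spec]
      · rintro (j | j) <;> simp [spec]
    exact congrArg (fun h => h A) key
  have h1 : N ≤ (spec n m f g A).natDegree := by
    have := card_le_degree_of_subset_roots (p := spec n m f g A) (Z := Finset.univ.map ⟨e, he⟩) (by
      intro y hy
      simp at hy
      obtain ⟨i, rfl⟩ := hy
      rw [mem_roots hne]
      exact hroot i)
    simpa using this
  refine h1.trans (natDegree_aeval_le x _ ?_ A)
  rintro (i | i)
  · exact hfc i
  · exact hgc i

lemma coeff_F_deg (l : ℕ) (x : Fin (n + 1) ⊕ Fin (m + 1)) :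
    ((F k n m).coeff l).degreeOf x ≤ if x.isLeft then 1 else 0 := by
  by_cases hl : l ≤ n
  · rw [F, gen_coeff _ _ _ hl, MvPolynomial.degreeOf_X]
    rcases x with x | x <;> simp
    split_ifs <;> simp
  · rw [F, coeff_eq_zero_of_natDegree_lt ((gen_natDegree_le _ _).trans_lt (not_le.1 hl))]
    simp

lemma coeff_G_deg (l : ℕ) (x : Fin (n + 1) ⊕ Fin (m + 1)) :
    ((G k n m).coeff l).degreeOf x ≤ if x.isLeft then 0 else 1 := by
  by_cases hl : l ≤ m
  · rw [G, gen_coeff _ _ _ hl, MvPolynomial.degreeOf_X]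
    rcases x with x | x <;> simp
    split_ifs <;> simp
  · rw [G, coeff_eq_zero_of_natDegree_lt ((gen_natDegree_le _ _).trans_lt (not_le.1 hl))]
    simp

lemma res_deg (x : Fin (n + 1) ⊕ Fin (m + 1)) :
    (resultant (F k n m) (G k n m) n m).degreeOf x ≤ if x.isLeft then m else n := by
  refine (degreeOf_det_le x _ (Fin.addCases (fun _ => if x.isLeft then 0 else 1)
    (fun _ => if x.isLeft then 1 else 0)) ?_).trans ?_
  · intro i j
    induction j using Fin.addCases with
    | left j =>
      simp only [Polynomial.sylvester, Matrix.of_apply, Fin.addCases_left]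
      split_ifs with h1 h2 h2
      · simpa [h2] using coeff_G_deg (k := k) n m (i - j) x
      · simpa [h2] using coeff_G_deg (k := k) n m (i - j) x
      · simp
      · simp
    | right j =>
      simp only [Polynomial.sylvester, Matrix.of_apply, Fin.addCases_right]
      split_ifs with h1 h2 h2
      · simpa [h2] using coeff_F_deg (k := k) n m (i - j) x
      · simpa [h2] using coeff_F_deg (k := k) n m (i - j) x
      · simp
      · simp
  · rw [Fin.sum_univ_add]
    simp
    split_ifs <;> simp

lemma main_deg [CharZero k] (hn : 1 ≤ n) (hm : 1 ≤ m)
    (A : MvPolynomial (Fin (n + 1) ⊕ Fin (m + 1)) k)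
    (hA : spec n m (F' k n m) (G' k n m) A = 0) (hd : A ∣ resultant (F k n m) (G k n m) n m)
    (x : Fin (n + 1) ⊕ Fin (m + 1)) : (if x.isLeft then m else n) ≤ A.degreeOf x := by
  rcases x with x | x
  · obtain ⟨g, f, e, he, hg, hf, hr, hc, hs⟩ := spec_exists k m n (n - x) hn (by omega)
    simp only [Sum.isLeft_inl, if_true]
    refine key_lemma n m A hA hd _ f (g.map C) hf (natDegree_map_le.trans hg) ?_ ?_ ?_ m e he ?_
    · rw [resultant_comm]
      exact mul_ne_zero (pow_ne_zero _ (by simp)) hr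
    · intro i
      refine (hc _).trans ?_
      have : (n - (i : ℕ) = n - x) → i = x := by intro h; ext; omega
      split_ifs <;> simp_all
    · intro i; simp
    · intro i
      obtain ⟨s, h1, h2⟩ := hs i
      refine ⟨s, h2, ?_⟩
      rw [Polynomial.map_map, show (evalRingHom (e i)).comp C = RingHom.id k by ext; simp]
      simpa using h1
  · obtain ⟨f, g, e, he, hf, hg, hr, hc, hs⟩ := spec_exists k n m (m - x) hm (by omega)
    simp only [Sum.isLeft_inr]
    refine key_lemma n m A hA hd _ (f.map C) g (natDegree_map_le.trans hf) hg hr ?_ ?_ n e he ?_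
    · intro i; simp
    · intro i
      refine (hc _).trans ?_
      have : (m - (i : ℕ) = m - x) → i = x := by intro h; ext; omega
      split_ifs <;> simp_all
    · intro i
      obtain ⟨s, h1, h2⟩ := hs i
      refine ⟨s, ?_, h2⟩
      rw [Polynomial.map_map, show (evalRingHom (e i)).comp C = RingHom.id k by ext; simp]
      simpa using h1

lemma res_ne_zero [CharZero k] (hm : 1 ≤ m) : resultant (F k n m) (G k n m) n m ≠ 0 := by
  intro h
  obtain ⟨f, g, e, he, hf, hg, hr, hc, hs⟩ := spec_exists k n m 0 hm (by omega)
  apply hr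
  rw [← res_map (k := k) n m _ _ (natDegree_map_le.trans hf) hg, h, map_zero]

lemma unit_of [CharZero k] (hn : 1 ≤ n) (hm : 1 ≤ m)
    (A B : MvPolynomial (Fin (n + 1) ⊕ Fin (m + 1)) k)
    (hAB : resultant (F k n m) (G k n m) n m = A * B)
    (hA : spec n m (F' k n m) (G' k n m) A = 0) : IsUnit B := by
  have hne := res_ne_zero (k := k) n m hm
  rw [hAB] at hne
  have hA0 := left_ne_zero_of_mul hne
  have hB0 := right_ne_zero_of_mul hne
  have hdeg : ∀ x, B.degreeOf x = 0 := by
    intro x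
    have h1 := res_deg (k := k) n m x
    have h2 := main_deg n m hn hm A hA (Dvd.intro _ hAB.symm) x
    rw [hAB, MvPolynomial.degreeOf_mul_eq hA0 hB0] at h1
    omega
  have hB : B = MvPolynomial.C (B.coeff 0) := by
    rw [← MvPolynomial.totalDegree_eq_zero_iff_eq_C, MvPolynomial.totalDegree_eq_zero_iff]
    intro d hd x
    have := MvPolynomial.monomial_le_degreeOf x hd
    rw [hdeg] at this
    omega
  rw [hB] at hB0 ⊢
  exact (IsUnit.mk0 _ (fun h => hB0 (by rw [h]; simp))).map MvPolynomial.C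

lemma irr [CharZero k] (hn : 1 ≤ n) (hm : 1 ≤ m) :
    Irreducible (resultant (F k n m) (G k n m) n m) := by
  have hphi := phi_res (k := k) n m (by omega)
  refine ⟨fun hu => ?_, fun A B hAB => ?_⟩
  · have := hu.map (spec n m (F' k n m) (G' k n m))
    rw [hphi] at this
    exact not_isUnit_zero this
  · rw [hAB, map_mul] at hphi
    rcases mul_eq_zero.1 hphi with h | h
    · exact Or.inr (unit_of n m hn hm A B hAB h)
    · exact Or.inl (unit_of n m hn hm B A (by rw [hAB, mul_comm]) h)

end

end GR

/-- Over an algebraically closed field `k` of characteristic zero, the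
generic resultant `Res_{n,m}(f, g)` of `f(Z) = v_0 Z^n + ⋯ + v_n` and
`g(Z) = w_0 Z^m + ⋯ + w_m` is an irreducible element of `R = k[v_0,…,v_n,w_0,…,w_m]`. -/
theorem genericRes_irreducible (k : Type*) [Field k] [IsAlgClosed k] [CharZero k]
    (n m : ℕ) (hn : 1 ≤ n) (hm : 1 ≤ m) :
    Irreducible
      (res n m
        (∑ i : Fin (n + 1),
          Polynomial.C (MvPolynomial.X (Sum.inl i) :
            MvPolynomial (Fin (n + 1) ⊕ Fin (m + 1)) k) * Polynomial.X ^ (n - (i : ℕ)))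
        (∑ j : Fin (m + 1),
          Polynomial.C (MvPolynomial.X (Sum.inr j) :
            MvPolynomial (Fin (n + 1) ⊕ Fin (m + 1)) k) * Polynomial.X ^ (m - (j : ℕ)))) := by

  change Irreducible (res n m (GR.F k n m) (GR.G k n m))
  obtain ⟨ε, hε⟩ := GR.res_eq n m (GR.F k n m) (GR.G k n m)
  rw [hε, resultant_comm, ← mul_assoc]
  have h1 : IsUnit (((ε : ℤ) : MvPolynomial (Fin (n + 1) ⊕ Fin (m + 1)) k)) :=
    ε.isUnit.map (Int.castRingHom _)
  have h2 : IsUnit ((-1 : MvPolynomial (Fin (n + 1) ⊕ Fin (m + 1)) k) ^ (m * n)) :=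
    (isUnit_one.neg).pow _
  exact (irreducible_isUnit_mul (h1.mul h2)).2 (GR.irr n m hn hm)
end

section
/- Let k be an algebraically closed field of characteristic zero, let n ≥ 2, and let R = k[p_0, …, p_n] be the polynomial ring in n+1 independent variables. Let f(Z) = p_0 Z^n + p_1 Z^{n−1} + ⋯ + p_n over R and let Δ_n ∈ R be the unique polynomial with Res_{n,n−1}(f, f′) = p_0 · Δ_n. Then Δ_n is an irreducible element of R. -/
open Polynomial

/-- The generic polynomial `f(Z) = p_0 Z^n + p_1 Z^{n-1} + ⋯ + p_n` over `k[p_0, …, p_n]`. -/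
noncomputable def genericPoly (k : Type*) [Field k] (n : ℕ) :
    Polynomial (MvPolynomial (Fin (n + 1)) k) :=
  ∑ i : Fin (n + 1), Polynomial.C (MvPolynomial.X i) * Polynomial.X ^ (n - (i : ℕ))

namespace DiscAux

lemma res_map {R S : Type*} [CommRing R] [CommRing S] (φ : R →+* S) (n m : ℕ) (f g : R[X]) :
    res n m (f.map φ) (g.map φ) = φ (res n m f g) := by
  unfold res
  rw [RingHom.map_det]
  congr 1
  ext i j
  induction i using Fin.addCases <;>
    simp [_root_.sylvester, apply_ite φ]

lemma sylvester_eq {R : Type*} [CommRing R] (n m : ℕ) (f g : R[X]) :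
    _root_.sylvester n m f g = (Polynomial.sylvester g f m n).transpose.submatrix
      (finSumFinEquiv.symm.trans ((Equiv.sumCongr Fin.revPerm Fin.revPerm).trans finSumFinEquiv))
      Fin.revPerm := by
  ext i j
  induction i using Fin.addCases with
  | left i =>
    simp [_root_.sylvester, Polynomial.sylvester, Fin.val_rev]
    have := i.2
    have := j.2
    split_ifs with h1 h2 h2
    · congr 1; omega
    · omega
    · omega
    · rfl
  | right i =>
    simp [_root_.sylvester, Polynomial.sylvester, Fin.val_rev]
    have := i.2
    have := j.2
    split_ifs with h1 h2 h2
    · congr 1; omega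
    · omega
    · omega
    · rfl

lemma res_eq {R : Type*} [CommRing R] (n m : ℕ) (f g : R[X]) :
    ∃ u : R, u ^ 2 = 1 ∧ res n m f g = u * Polynomial.resultant f g n m := by
  set e := (finSumFinEquiv.symm.trans ((Equiv.sumCongr (Fin.revPerm (n := m))
    (Fin.revPerm (n := n))).trans finSumFinEquiv)) with he
  have key : res n m f g = ((Equiv.Perm.sign (e.symm.trans Fin.revPerm) : ℤˣ) : ℤ)
      * Polynomial.resultant g f m n := by
    unfold res
    rw [sylvester_eq, ← he, Polynomial.resultant,
      ← Matrix.det_transpose (Polynomial.sylvester g f m n), ← Matrix.det_permute',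
      ← Matrix.det_submatrix_equiv_self e
        ((Polynomial.sylvester g f m n).transpose.submatrix id (e.symm.trans Fin.revPerm))]
    congr 1
    ext i j
    simp
  rw [Polynomial.resultant_comm] at key
  refine ⟨_, ?_, key.trans (mul_assoc _ _ _).symm⟩
  rw [mul_pow, ← pow_mul, mul_comm _ 2, pow_mul, neg_one_sq, one_pow, mul_one, ← Int.cast_pow,
    ← Units.val_pow_eq_pow_val, Int.units_sq]
  simp

open Finset in
lemma res_split {S : Type*} [CommRing S] [IsDomain S] (m : ℕ) (a : S) (ha : a ≠ 0)
    (b : Fin (m + 2) → S) :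
    ∃ u : S, u ^ 2 = 1 ∧ res (m + 2) (m + 1) (C a * ∏ i, (X - C (b i)))
      (derivative (C a * ∏ i, (X - C (b i)))) =
      u * (a ^ (2 * m + 3) * ∏ p ∈ (univ : Finset (Fin (m + 2))).offDiag, (b p.1 - b p.2)) := by
  set F := C a * ∏ i, (X - C (b i)) with hF
  obtain ⟨u, hu, h⟩ := res_eq (m + 2) (m + 1) F (derivative F)
  refine ⟨u, hu, h.trans ?_⟩
  congr 1
  have hd : F.natDegree = m + 2 := by
    rw [hF, natDegree_C_mul ha, natDegree_prod_of_monic _ _ (fun i _ => monic_X_sub_C _)]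
    simp
  have hl : F.leadingCoeff = a := by
    rw [hF, leadingCoeff_mul, leadingCoeff_C, (monic_prod_of_monic _ _ (fun i _ => monic_X_sub_C _)).leadingCoeff,
      mul_one]
  have hs : F.Splits := by
    rw [hF]
    exact (Splits.C a).mul (Splits.prod (fun i _ => Splits.X_sub_C _))
  have hr : F.roots = (univ.val.map b : Multiset S) := by
    rw [hF, roots_C_mul _ ha]
    have : (∏ i, (X - C (b i))) = ((univ.val.map b).map (fun x => X - C x)).prod := by
      rw [Multiset.map_map]; rfl
    rw [this, roots_multiset_prod_X_sub_C]
  have hg : (derivative F).natDegree ≤ m + 1 := by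
    have := natDegree_derivative_le F
    omega
  have hev : ∀ i, (derivative F).eval (b i) = a * ∏ j ∈ univ.erase i, (b i - b j) := by
    intro i
    have := Lagrange.eval_nodal_derivative_eval_node_eq (v := b) (mem_univ i)
    rw [Lagrange.nodal] at this
    rw [hF, derivative_C_mul, eval_mul, eval_C, this, Lagrange.nodal, eval_prod]
    simp
  have := resultant_eq_prod_eval F (derivative F) (m + 1) hg hs
  rw [hd, hl, hr, Multiset.map_map] at this
  rw [this]
  have h2 : (Multiset.map ((fun x => eval x (derivative F)) ∘ b) univ.val).prod
      = ∏ i, (a * ∏ j ∈ univ.erase i, (b i - b j)) := by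
    rw [← Finset.prod_congr rfl (fun i _ => hev i)]; rfl
  rw [h2, prod_mul_distrib, prod_const, card_univ, Fintype.card_fin, ← mul_assoc, ← pow_add]
  congr 1
  · congr 1; omega
  · rw [prod_sigma']
    refine prod_bij' (fun x _ => (x.1, x.2)) (fun p _ => ⟨p.1, p.2⟩) ?_ ?_ ?_ ?_ ?_
    · simp; tauto
    · simp; tauto
    · simp
    · simp
    · simp

lemma generic_map {k S : Type*} [Field k] [CommRing S] [Algebra k S] (n : ℕ) (F : S[X])
    (hF : F.natDegree ≤ n) :
    (genericPoly k n).map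
      (MvPolynomial.aeval (R := k) (fun i : Fin (n + 1) => F.coeff (n - (i : ℕ)))).toRingHom = F := by
  conv_rhs => rw [F.as_sum_range_C_mul_X_pow' (Nat.lt_succ_of_le hF), ← Finset.sum_range_reflect,
    Finset.sum_range]
  simp [genericPoly, Polynomial.map_sum]

lemma res_generic {k S : Type*} [Field k] [CommRing S] [Algebra k S] (n : ℕ) (F : S[X])
    (hF : F.natDegree ≤ n) :
    (MvPolynomial.aeval (R := k) (fun i : Fin (n + 1) => F.coeff (n - (i : ℕ))))
      (res n (n - 1) (genericPoly k n) (derivative (genericPoly k n))) =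
      res n (n - 1) F (derivative F) := by
  have := res_map (MvPolynomial.aeval (R := k)
    (fun i : Fin (n + 1) => F.coeff (n - (i : ℕ)))).toRingHom n (n - 1)
    (genericPoly k n) (derivative (genericPoly k n))
  rw [← derivative_map, generic_map n F hF] at this
  exact this.symm

lemma coeff_generic (k : Type*) [Field k] (n : ℕ) :
    (genericPoly k n).coeff n = MvPolynomial.X 0 := by
  unfold genericPoly
  rw [finsetSum_coeff, Finset.sum_eq_single 0]
  · simp
  · intro b _ hb
    have : (b : ℕ) ≠ 0 := fun h => hb (Fin.ext h)
    have := b.2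
    rw [coeff_C_mul_X_pow, if_neg (by omega)]
  · simp

lemma X_dvd_res (k : Type*) [Field k] (m : ℕ) :
    (MvPolynomial.X 0 : MvPolynomial (Fin (m + 2 + 1)) k) ∣
      res (m + 2) (m + 1) (genericPoly k (m + 2)) (derivative (genericPoly k (m + 2))) := by
  unfold res
  rw [Matrix.det_apply]
  refine Finset.dvd_sum fun σ _ => ?_
  rw [Units.smul_def, zsmul_eq_mul]
  refine Dvd.dvd.mul_left ?_ _
  refine dvd_trans ?_ (Finset.dvd_prod_of_mem _ (Finset.mem_univ (⟨0, by omega⟩ : Fin (m + 1 + (m + 2)))))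
  generalize σ _ = i
  induction i using Fin.addCases with
  | left i =>
    simp only [_root_.sylvester, Matrix.of_apply, Fin.addCases_left]
    split_ifs with h
    · have : (i : ℕ) = 0 := by simpa using h.1
      simp [this, coeff_generic]
    · exact dvd_zero _
  | right i =>
    simp only [_root_.sylvester, Matrix.of_apply, Fin.addCases_right]
    split_ifs with h
    · have : (i : ℕ) = 0 := by simpa using h.1
      simp [this, coeff_derivative, coeff_generic]
    · exact dvd_zero _

section Sub
variable {k σ : Type*} [Field k] [DecidableEq σ]

noncomputable def tau (k : Type*) [Field k] (i j : σ) : MvPolynomial σ k →ₐ[k] MvPolynomial σ k :=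
  MvPolynomial.aeval (fun o => MvPolynomial.X (if o = i then j else o))

lemma tau_X (i j o : σ) : tau k i j (MvPolynomial.X o) = MvPolynomial.X (if o = i then j else o) := by
  simp [tau]

lemma sub_dvd_iff (i j : σ) (H : MvPolynomial σ k) :
    (MvPolynomial.X i - MvPolynomial.X j) ∣ H ↔ tau k i j H = 0 := by
  constructor
  · rintro ⟨c, rfl⟩
    rw [map_mul, map_sub, tau_X, tau_X]
    simp
  · intro h
    set I : Ideal (MvPolynomial σ k) := Ideal.span {MvPolynomial.X i - MvPolynomial.X j} with hI
    have hc : (Ideal.Quotient.mkₐ k I).comp (tau k i j) = Ideal.Quotient.mkₐ k I := by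
      apply MvPolynomial.algHom_ext
      intro o
      rw [AlgHom.comp_apply, tau_X]
      split_ifs with h
      · subst h
        simp only [Ideal.Quotient.mkₐ_eq_mk]
        rw [eq_comm, Ideal.Quotient.eq, hI]
        exact Ideal.mem_span_singleton_self _
      · rfl
    have h2 : Ideal.Quotient.mkₐ k I H = 0 := by
      rw [← hc, AlgHom.comp_apply, h, map_zero]
    rw [Ideal.Quotient.mkₐ_eq_mk, Ideal.Quotient.eq_zero_iff_mem, hI,
      Ideal.mem_span_singleton] at h2
    exact h2

lemma prime_sub {i j : σ} (hij : i ≠ j) :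
    Prime (MvPolynomial.X i - MvPolynomial.X j : MvPolynomial σ k) := by
  refine ⟨?_, ?_, ?_⟩
  · rw [sub_ne_zero]
    exact fun h => hij (MvPolynomial.X_injective h)
  · intro h
    have := (sub_dvd_iff i j (1 : MvPolynomial σ k)).1 h.dvd
    simp at this
  · intro f g
    simp only [sub_dvd_iff, map_mul, mul_eq_zero]
    exact id

lemma sub_dvd_sub {i j p q : σ} (hpq : p ≠ q)
    (h : (MvPolynomial.X i - MvPolynomial.X j : MvPolynomial σ k) ∣
      MvPolynomial.X p - MvPolynomial.X q) : (p = i ∧ q = j) ∨ (p = j ∧ q = i) := by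
  rw [sub_dvd_iff, map_sub, tau_X, tau_X, sub_eq_zero] at h
  have := MvPolynomial.X_injective h
  split_ifs at this <;> grind

lemma sub_not_dvd_X (i j p : σ) :
    ¬ (MvPolynomial.X i - MvPolynomial.X j : MvPolynomial σ k) ∣ MvPolynomial.X p := by
  rw [sub_dvd_iff, tau_X]
  exact MvPolynomial.X_ne_zero _

lemma sq_dvd [CharZero k] {i j : σ} (hij : i ≠ j) (G : MvPolynomial σ k)
    (hG : MvPolynomial.rename (Equiv.swap i j) G = G)
    (h : (MvPolynomial.X i - MvPolynomial.X j) ∣ G) :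
    (MvPolynomial.X i - MvPolynomial.X j) ^ 2 ∣ G := by
  obtain ⟨H, rfl⟩ := h
  rw [pow_two]
  refine mul_dvd_mul_left _ ?_
  rw [map_mul, map_sub, MvPolynomial.rename_X, MvPolynomial.rename_X, Equiv.swap_apply_left,
    Equiv.swap_apply_right, ← neg_sub, neg_mul, ← mul_neg] at hG
  have h1 := mul_left_cancel₀ (prime_sub (k := k) hij).ne_zero hG
  have h2 : (tau k i j).comp (MvPolynomial.rename (Equiv.swap i j)) = tau k i j := by
    apply MvPolynomial.algHom_ext
    intro o
    rw [AlgHom.comp_apply, MvPolynomial.rename_X, tau_X, tau_X, Equiv.swap_apply_def]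
    split_ifs <;> simp_all
  rw [sub_dvd_iff]
  have h3 : tau k i j (MvPolynomial.rename (Equiv.swap i j) H) = tau k i j H := by
    rw [← AlgHom.comp_apply, h2]
  rw [neg_eq_iff_eq_neg.1 h1, map_neg] at h3
  exact neg_eq_self.1 h3
end Sub

noncomputable def rootPoly (k : Type*) [Field k] (n : ℕ) :
    Polynomial (MvPolynomial (Option (Fin n)) k) :=
  C (MvPolynomial.X none) * ∏ i : Fin n, (X - C (MvPolynomial.X (some i)))

lemma natDegree_split {S : Type*} [CommRing S] [IsDomain S] (n : ℕ) (a : S) (b : Fin n → S) :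
    (C a * ∏ i, (X - C (b i))).natDegree ≤ n := by
  refine (natDegree_C_mul_le _ _).trans ?_
  rw [natDegree_prod_of_monic _ _ (fun i _ => monic_X_sub_C _)]
  simp

lemma coeff_split {S : Type*} [CommRing S] [IsDomain S] (n : ℕ) (a : S) (b : Fin n → S) :
    (C a * ∏ i, (X - C (b i))).coeff n = a := by
  have hm := monic_prod_of_monic Finset.univ (fun i => X - C (b i)) (fun i _ => monic_X_sub_C _)
  have hd : (∏ i, (X - C (b i))).natDegree = n := by
    rw [natDegree_prod_of_monic _ _ (fun i _ => monic_X_sub_C _)]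
    simp
  rw [coeff_C_mul]
  have := hm.coeff_natDegree
  rw [hd] at this
  rw [this, mul_one]

noncomputable def phi (k : Type*) [Field k] (n : ℕ) :
    MvPolynomial (Fin (n + 1)) k →ₐ[k] MvPolynomial (Option (Fin n)) k :=
  MvPolynomial.aeval (R := k) (fun i : Fin (n + 1) => (rootPoly k n).coeff (n - (i : ℕ)))

lemma phi_X0 (k : Type*) [Field k] (n : ℕ) : phi k n (MvPolynomial.X 0) = MvPolynomial.X none := by
  rw [phi, MvPolynomial.aeval_X]
  exact coeff_split _ _ _

lemma phi_inv (k : Type*) [Field k] (n : ℕ) (s : Equiv.Perm (Fin n))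
    (g : MvPolynomial (Fin (n + 1)) k) :
    MvPolynomial.rename (Equiv.optionCongr s) (phi k n g) = phi k n g := by
  have : (MvPolynomial.rename (Equiv.optionCongr s)).comp (phi k n) = phi k n := by
    apply MvPolynomial.algHom_ext
    intro i
    rw [AlgHom.comp_apply, phi, MvPolynomial.aeval_X]
    have h : (rootPoly k n).map (MvPolynomial.rename (Equiv.optionCongr s)
        : MvPolynomial (Option (Fin n)) k →ₐ[k] _).toRingHom = rootPoly k n := by
      simp only [rootPoly, Polynomial.map_mul, Polynomial.map_prod, Polynomial.map_sub, map_X, map_C]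
      simp only [AlgHom.toRingHom_eq_coe, RingHom.coe_coe, MvPolynomial.rename_X]
      congr 1
      exact Equiv.prod_comp s (fun i => (X - C (MvPolynomial.X (some i)) :
        Polynomial (MvPolynomial (Option (Fin n)) k)))
    conv_rhs => rw [← h, coeff_map]
    rfl
  rw [← AlgHom.comp_apply, this]

lemma phi_inj (k : Type*) [Field k] [IsAlgClosed k] (n : ℕ) : Function.Injective (phi k n) := by
  rw [injective_iff_map_eq_zero]
  intro G hG
  by_contra hne
  have h1 : MvPolynomial.X 0 * G ≠ 0 := mul_ne_zero (MvPolynomial.X_ne_zero _) hne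
  have : Infinite k := IsAlgClosed.instInfinite
  have h2 : ∃ c : Fin (n + 1) → k, MvPolynomial.eval c (MvPolynomial.X 0 * G) ≠ 0 := by
    by_contra! hc
    exact h1 (MvPolynomial.funext (fun c => by rw [hc, map_zero]))
  obtain ⟨c, hc⟩ := h2
  rw [map_mul, MvPolynomial.eval_X] at hc
  have hc0 := left_ne_zero_of_mul hc
  set F : k[X] := (genericPoly k n).map (MvPolynomial.eval c) with hF
  have hFc : ∀ i : Fin (n + 1), F.coeff (n - (i : ℕ)) = c i := by
    intro i
    rw [hF, coeff_map, genericPoly, finsetSum_coeff, Finset.sum_eq_single i]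
    · simp
    · intro b _ hb
      have : (b : ℕ) ≠ i := fun h => hb (Fin.ext h)
      have := b.2
      have := i.2
      rw [coeff_C_mul_X_pow, if_neg (by omega)]
    · simp
  have hFd' : F.natDegree ≤ n := by
    rw [hF]
    refine natDegree_map_le.trans ?_
    rw [genericPoly]
    refine natDegree_sum_le_of_forall_le _ _ (fun i _ => ?_)
    exact (natDegree_C_mul_X_pow_le _ _).trans (by omega)
  have hFn : F.coeff n = c 0 := hFc 0
  have hFd : F.natDegree = n := by
    apply le_antisymm hFd'
    apply le_natDegree_of_ne_zero
    rwa [hFn]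
  have hs := IsAlgClosed.splits F
  have hcard : F.roots.card = n := by rw [← hs.natDegree_eq_card_roots, hFd]
  obtain ⟨l, hl⟩ := Quot.exists_rep F.roots
  have hl' : (l : Multiset k) = F.roots := hl
  have hlen : l.length = n := by rw [← hcard, ← hl']; rfl
  subst hlen
  have hprod : F = C (c 0) * ∏ i : Fin l.length, (X - C (l.get i)) := by
    conv_lhs => rw [hs.eq_prod_roots]
    rw [leadingCoeff, hFd, hFn, ← hl']
    congr 1
    rw [Multiset.map_coe, Multiset.prod_coe, ← List.prod_ofFn]
    congr 1
    conv_lhs => rw [← List.ofFn_get l, List.map_ofFn]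
    rfl
  let b : Option (Fin l.length) → k := fun o => o.elim (c 0) l.get
  have h3 : (MvPolynomial.aeval b).comp (phi k l.length) = MvPolynomial.aeval c := by
    apply MvPolynomial.algHom_ext
    intro i
    rw [AlgHom.comp_apply, phi, MvPolynomial.aeval_X, MvPolynomial.aeval_X]
    have h : (rootPoly k l.length).map (MvPolynomial.aeval (R := k) b).toRingHom = F := by
      rw [hprod]
      simp only [rootPoly, Polynomial.map_mul, Polynomial.map_prod, Polynomial.map_sub, map_X, map_C]
      simp [b]
    rw [← hFc i, ← h, coeff_map]
    rfl
  apply right_ne_zero_of_mul hc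
  have := congrArg (fun ψ => ψ G) h3
  simp only [AlgHom.comp_apply, hG, map_zero] at this
  rw [this]
  rfl

open Finset in
lemma offDiag_eq {S : Type*} [CommRing S] (n : ℕ) (f : Fin n → Fin n → S) :
    ∏ p ∈ (univ : Finset (Fin n)).offDiag, f p.1 p.2 = ∏ i, ∏ j, if i = j then 1 else f i j := by
  have : (univ : Finset (Fin n)).offDiag = (univ ×ˢ univ).filter (fun p => ¬ p.1 = p.2) := by
    ext; simp
  rw [this, prod_filter, prod_product]
  simp [ite_not]

open Finset in
lemma not_X_dvd (k : Type*) [Field k] [CharZero k] (m : ℕ)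
    (E : MvPolynomial (Fin (m + 2 + 1)) k)
    (h : res (m + 2) (m + 1) (genericPoly k (m + 2)) (derivative (genericPoly k (m + 2))) =
      MvPolynomial.X 0 * (MvPolynomial.X 0 * E)) : False := by
  let c : Fin (m + 1) → k := fun j => (j : ℕ) + 1
  let P : k[X][X] := (C X * X - 1) * ∏ j : Fin (m + 1), (X - C (C (c j)))
  let K := FractionRing k[X]
  let t : K := algebraMap k[X] K X
  have hinj : Function.Injective (algebraMap k[X] K) := IsFractionRing.injective _ _
  have ht : t ≠ 0 := by
    intro h0
    exact X_ne_zero (hinj (h0.trans (map_zero _).symm))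
  let d : Fin (m + 1) → K := fun j => algebraMap k[X] K (C (c j))
  let b : Fin (m + 2) → K := Fin.cons t⁻¹ d
  have hPm : P.map (algebraMap k[X] K) = C t * ∏ i, (X - C (b i)) := by
    rw [Fin.prod_univ_succ, ← mul_assoc]
    simp only [P, Polynomial.map_mul, Polynomial.map_prod, Polynomial.map_sub, map_X, map_C,
      Polynomial.map_one]
    congr 1
    simp only [b, Fin.cons_zero, mul_sub, ← C_mul]
    rw [mul_inv_cancel₀ ht, C_1]
  have hPd : P.natDegree ≤ m + 2 := by
    rw [← natDegree_map_eq_of_injective hinj, hPm]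
    exact natDegree_split _ _ _
  have hPc : P.coeff (m + 2) = X := by
    apply hinj
    rw [← coeff_map, hPm]
    exact coeff_split _ _ _
  have h1 := res_generic (k := k) (m + 2) P hPd
  set ψ := (MvPolynomial.aeval (R := k) (fun i : Fin (m + 2 + 1) => P.coeff (m + 2 - (i : ℕ))))
    with hψ
  have hψ0 : ψ (MvPolynomial.X 0) = X := by
    rw [hψ, MvPolynomial.aeval_X]; exact hPc
  change ψ (res (m + 2) (m + 1) _ _) = res (m + 2) (m + 1) _ _ at h1
  rw [h, map_mul, map_mul, hψ0] at h1
  have h2 := congrArg (algebraMap k[X] K) h1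
  rw [← res_map, ← derivative_map, hPm] at h2
  obtain ⟨u, hu, hr⟩ := res_split m t ht b
  rw [hr] at h2
  set q := ψ E
  let A : k[X] := ∏ j, (1 - X * C (c j))
  let B : k[X] := ∏ j, (X * C (c j) - 1)
  let D : k[X] := ∏ i, ∏ j, if i = j then 1 else (C (c i) - C (c j))
  have hW : t ^ (2 * m + 2) * ∏ p ∈ (univ : Finset (Fin (m + 2))).offDiag, (b p.1 - b p.2)
      = algebraMap k[X] K (A * B * D) := by
    rw [offDiag_eq (m + 2) (fun i j => b i - b j)]
    have e1 : ∏ i, ∏ j, (if i = j then 1 else (b i - b j)) =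
        (∏ j, (t⁻¹ - d j)) * ((∏ j, (d j - t⁻¹)) * ∏ i, ∏ j, if i = j then 1 else (d i - d j)) := by
      rw [Fin.prod_univ_succ, Fin.prod_univ_succ]
      simp only [Fin.prod_univ_succ (n := m + 1), prod_mul_distrib]
      simp [b, Fin.succ_ne_zero, (Fin.succ_ne_zero _).symm]
    have e2 : t ^ (m + 1) * (∏ j, (t⁻¹ - d j)) = algebraMap k[X] K A := by
      have : t ^ (m + 1) = ∏ j : Fin (m + 1), t := by simp
      rw [this, ← prod_mul_distrib, map_prod]
      refine prod_congr rfl fun j _ => ?_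
      rw [mul_sub, mul_inv_cancel₀ ht, map_sub, map_mul, map_one]
    have e3 : t ^ (m + 1) * (∏ j, (d j - t⁻¹)) = algebraMap k[X] K B := by
      have : t ^ (m + 1) = ∏ j : Fin (m + 1), t := by simp
      rw [this, ← prod_mul_distrib, map_prod]
      refine prod_congr rfl fun j _ => ?_
      rw [mul_sub, mul_inv_cancel₀ ht, map_sub, map_mul, map_one]
    have e4 : (∏ i, ∏ j, if i = j then 1 else (d i - d j)) = algebraMap k[X] K D := by
      simp only [D, map_prod]
      refine prod_congr rfl fun i _ => prod_congr rfl fun j _ => ?_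
      split_ifs
      · rw [map_one]
      · rw [map_sub]
    rw [e1, e4, map_mul, map_mul, ← e2, ← e3]
    ring
  have h3 : (X * (X * q)) ^ 2 = (X * (A * B * D)) ^ 2 := by
    apply hinj
    rw [map_pow, h2, map_pow, map_mul _ X (A * B * D), ← hW, mul_pow, hu, one_mul]
    change _ = (t * _) ^ 2
    ring
  have h4 : (X * q) ^ 2 = (A * B * D) ^ 2 := by
    rw [mul_pow, mul_pow X (A * B * D)] at h3
    exact mul_left_cancel₀ (pow_ne_zero 2 X_ne_zero) h3
  have h5 := congrArg (eval 0) h4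
  have hD : eval 0 D ≠ 0 := by
    simp only [D, eval_prod]
    refine prod_ne_zero_iff.2 fun i _ => prod_ne_zero_iff.2 fun j _ => ?_
    split_ifs with hij
    · simp
    · simp only [eval_sub, eval_C, c]
      intro h0
      apply hij
      have : ((i : ℕ) : k) = (j : ℕ) := by linear_combination h0
      exact Fin.ext (by exact_mod_cast this)
  have hA : eval 0 A ≠ 0 := by simp [A, eval_prod]
  have hB : eval 0 B ≠ 0 := by simp [B, eval_prod]
  simp only [eval_pow, eval_mul, eval_X, zero_mul] at h5
  exact pow_ne_zero 2 (mul_ne_zero (mul_ne_zero hA hB) hD) (by rw [← h5]; simp)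

section Main
open Finset

variable (k : Type*) [Field k] [IsAlgClosed k] [CharZero k] (m : ℕ)
  (Δ : MvPolynomial (Fin (m + 2 + 1)) k)

lemma phi_disc
    (h : res (m + 2) (m + 1) (genericPoly k (m + 2)) (derivative (genericPoly k (m + 2))) =
      MvPolynomial.X 0 * Δ) :
    ∃ u : MvPolynomial (Option (Fin (m + 2))) k, IsUnit u ∧ phi k (m + 2) Δ =
      u * (MvPolynomial.X none ^ (2 * m + 2) * ∏ p ∈ (univ : Finset (Fin (m + 2))).offDiag,
        (MvPolynomial.X (some p.1) - MvPolynomial.X (some p.2))) := by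
  obtain ⟨u, hu, hr⟩ := res_split m (MvPolynomial.X none : MvPolynomial (Option (Fin (m + 2))) k)
    (MvPolynomial.X_ne_zero _) (fun i => MvPolynomial.X (some i))
  have h1 := res_generic (k := k) (m + 2) (rootPoly k (m + 2)) (natDegree_split _ _ _)
  change phi k (m + 2) (res (m + 2) (m + 1) _ _) = res (m + 2) (m + 1) _ _ at h1
  rw [h, map_mul, phi_X0] at h1
  refine ⟨u, IsUnit.of_pow_eq_one hu two_ne_zero, ?_⟩
  apply mul_left_cancel₀ (MvPolynomial.X_ne_zero (none : Option (Fin (m + 2))) (R := k))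
  rw [h1]
  refine hr.trans ?_
  ring

lemma dvd_trans_perm {n : ℕ} (G : MvPolynomial (Fin (n + 1)) k) {i j p q : Fin n} (hij : i ≠ j)
    (hpq : p ≠ q)
    (h : (MvPolynomial.X (some i) - MvPolynomial.X (some j)) ∣ phi k n G) :
    (MvPolynomial.X (some p) - MvPolynomial.X (some q)) ∣ phi k n G := by
  obtain ⟨s, hs1, hs2⟩ : ∃ s : Equiv.Perm (Fin n), s i = p ∧ s j = q := by
    refine ⟨Equiv.swap i p * Equiv.swap j (Equiv.swap i p q), ?_, ?_⟩
    · rw [Equiv.Perm.mul_apply, Equiv.swap_apply_of_ne_of_ne hij, Equiv.swap_apply_left]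
      intro h
      apply hpq
      have := congrArg (Equiv.swap i p) h
      rwa [Equiv.swap_apply_self, Equiv.swap_apply_left] at this
    · rw [Equiv.Perm.mul_apply, Equiv.swap_apply_left, Equiv.swap_apply_self]
  have h2 := map_dvd (MvPolynomial.rename (R := k) (Equiv.optionCongr s)) h
  rw [phi_inv, map_sub, MvPolynomial.rename_X, MvPolynomial.rename_X] at h2
  simpa [hs1, hs2] using h2

lemma isUnit_factor
    (h : res (m + 2) (m + 1) (genericPoly k (m + 2)) (derivative (genericPoly k (m + 2))) =
      MvPolynomial.X 0 * Δ) (g : MvPolynomial (Fin (m + 2 + 1)) k) (hg : g ∣ Δ)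
    (hd : ¬ (MvPolynomial.X (some 0) - MvPolynomial.X (some 1)) ∣ phi k (m + 2) g) :
    IsUnit g := by
  obtain ⟨u, hu, hΔ⟩ := phi_disc k m Δ h
  have h1 : phi k (m + 2) g ∣ MvPolynomial.X none ^ (2 * m + 2) := by
    have h2 := map_dvd (phi k (m + 2)) hg
    rw [hΔ, hu.dvd_mul_left] at h2
    refine IsRelPrime.dvd_of_dvd_mul_right ?_ h2
    refine IsRelPrime.prod_right fun p hp => ?_
    have hp' : p.1 ≠ p.2 := (mem_offDiag.1 hp).2.2
    have hpr : Prime (MvPolynomial.X (some p.1) - MvPolynomial.X (some p.2) :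
      MvPolynomial (Option (Fin (m + 2))) k) := prime_sub (by simpa using hp')
    refine IsRelPrime.symm (hpr.irreducible.isRelPrime_iff_not_dvd.2 fun h3 => hd ?_)
    exact dvd_trans_perm k g hp' (by simp) h3
  obtain ⟨i, -, v, hv⟩ := (dvd_prime_pow (MvPolynomial.X_prime) _).1 h1
  obtain ⟨c, hc, hcv⟩ := (MvPolynomial.isUnit_iff_eq_C_of_isReduced).1 v.isUnit
  have h3 : g * MvPolynomial.C c = MvPolynomial.X 0 ^ i := by
    apply phi_inj
    rw [map_mul, map_pow, phi_X0, ← hv, hcv]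
    congr 1
    exact (phi k (m + 2)).commutes c
  have hcu : IsUnit (MvPolynomial.C c : MvPolynomial (Fin (m + 2 + 1)) k) := hc.map _
  rcases Nat.eq_zero_or_pos i with rfl | hi
  · rw [pow_zero] at h3
    exact IsUnit.of_mul_eq_one _ h3
  · exfalso
    have h4 : MvPolynomial.X 0 ∣ g := by
      rw [← hcu.dvd_mul_right, h3]
      exact dvd_pow_self _ hi.ne'
    obtain ⟨E, hE⟩ := h4.trans hg
    rw [hE] at h
    exact not_X_dvd k m E h

lemma main
    (h : res (m + 2) (m + 1) (genericPoly k (m + 2)) (derivative (genericPoly k (m + 2))) =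
      MvPolynomial.X 0 * Δ) : Irreducible Δ := by
  obtain ⟨u, hu, hΔ⟩ := phi_disc k m Δ h
  set x : Fin (m + 2) → MvPolynomial (Option (Fin (m + 2))) k := fun i => MvPolynomial.X (some i)
    with hx
  have hpr : Prime (x 0 - x 1) := prime_sub (by simp)
  set W := ∏ p ∈ (univ : Finset (Fin (m + 2))).offDiag, (x p.1 - x p.2) with hW
  have m1 : ((0, 1) : Fin (m + 2) × Fin (m + 2)) ∈ (univ : Finset (Fin (m + 2))).offDiag := by simp
  have m2 : ((1, 0) : Fin (m + 2) × Fin (m + 2)) ∈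
    ((univ : Finset (Fin (m + 2))).offDiag).erase (0, 1) := by simp
  set W' := ∏ p ∈ (((univ : Finset (Fin (m + 2))).offDiag).erase (0, 1)).erase (1, 0),
    (x p.1 - x p.2) with hW'
  have hWW : W = (x 0 - x 1) * ((x 1 - x 0) * W') := by
    rw [hW, ← mul_prod_erase _ _ m1, ← mul_prod_erase _ _ m2]
  constructor
  · intro hun
    apply hpr.not_unit
    refine isUnit_of_dvd_unit ?_ (hun.map (phi k (m + 2)))
    rw [hΔ]
    change _ ∣ u * (_ * W)
    rw [hWW]
    exact Dvd.dvd.mul_left (Dvd.dvd.mul_left (dvd_mul_right _ _) _) _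
  · intro g g' hgg
    by_contra! hcon
    have d1 : (x 0 - x 1) ∣ phi k (m + 2) g := by
      by_contra hd
      exact hcon.1 (isUnit_factor k m Δ h g ⟨g', hgg⟩ hd)
    have d2 : (x 0 - x 1) ∣ phi k (m + 2) g' := by
      by_contra hd
      exact hcon.2 (isUnit_factor k m Δ h g' ⟨g, hgg.trans (mul_comm _ _)⟩ hd)
    have sw : ∀ g, MvPolynomial.rename (Equiv.swap (some (0 : Fin (m + 2))) (some 1))
        (phi k (m + 2) g) = phi k (m + 2) g := by
      intro g
      have := phi_inv k (m + 2) (Equiv.swap 0 1) g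
      rwa [Equiv.optionCongr_swap] at this
    have q1 : (x 0 - x 1) ^ 2 ∣ phi k (m + 2) g := sq_dvd (by simp) _ (sw g) d1
    have q := mul_dvd_mul q1 d2
    rw [← map_mul, ← hgg, hΔ] at q
    change _ ∣ u * (_ * W) at q
    have e : u * (MvPolynomial.X none ^ (2 * m + 2) * W) =
        (x 0 - x 1) ^ 2 * (-u * (MvPolynomial.X none ^ (2 * m + 2) * W')) := by
      rw [hWW]; ring
    rw [e] at q
    have q' := (mul_dvd_mul_iff_left (pow_ne_zero 2 hpr.ne_zero)).1 q
    rw [hu.neg.dvd_mul_left] at q'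
    rcases hpr.dvd_or_dvd q' with q' | q'
    · exact sub_not_dvd_X _ _ _ (hpr.dvd_of_dvd_pow q')
    · rw [hW', hpr.dvd_finset_prod_iff] at q'
      obtain ⟨p, hp, hpd⟩ := q'
      simp only [mem_erase, mem_offDiag] at hp
      have := sub_dvd_sub (by simpa using hp.2.2.2.2) hpd
      simp only [Option.some.injEq] at this
      rcases this with ⟨a, b⟩ | ⟨a, b⟩
      · exact hp.2.1 (Prod.ext a b)
      · exact hp.1 (Prod.ext a b)
end Main

end DiscAux

/-- Over an algebraically closed field `k` of characteristic zero and
`n ≥ 2`, the discriminant polynomial `Δ_n ∈ R = k[p_0, …, p_n]`, characterized by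
`Res_{n,n−1}(f, f′) = p_0 · Δ_n` for the generic `f(Z) = p_0 Z^n + ⋯ + p_n`, exists and is
an irreducible element of `R`. -/
theorem discriminant_irreducible (k : Type*) [Field k] [IsAlgClosed k] [CharZero k]
    (n : ℕ) (hn : 2 ≤ n) :
    (∃ Δ : MvPolynomial (Fin (n + 1)) k,
        res n (n - 1) (genericPoly k n) (derivative (genericPoly k n)) =
          MvPolynomial.X 0 * Δ) ∧
      ∀ Δ : MvPolynomial (Fin (n + 1)) k,
        res n (n - 1) (genericPoly k n) (derivative (genericPoly k n)) =
            MvPolynomial.X 0 * Δ →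
          Irreducible Δ := by
  obtain ⟨m, rfl⟩ := Nat.exists_eq_add_of_le' hn
  exact ⟨DiscAux.X_dvd_res k m, fun Δ h => DiscAux.main k m Δ h⟩
end
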